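/- arXiv:1702.08080 — 4 statements merged into one kernel-verified Lean document; each statement's English description precedes it below -/
import Mathlib

section
/- The abelianization of G (equivalently, the first integral homology group of the Weber–Seifert hyperbolic dodecahedral space) is isomorphic to (ℤ/5ℤ)³. -/
/-!
Write `u, …, z` additively for the classes of the generators in the abelianization. Integer
combinations of the six relations give

* `u = 2x + y + 2z`, `v = x + 2y - 2z`, `w = -2x + 2y + z`, and
* `5x = 5y = 5z = 0`,

so `x, y, z` generate and there is a homomorphism `(ℤ/5)³ → Gᵃᵇ` sending the standard basis to them
(`fromZMod`). Conversely the same formulas define a homomorphism `Gᵃᵇ → (ℤ/5)³` (`toZMod`), because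
all six relators vanish modulo 5 under them. The two maps are mutually inverse on generators.
-/

/-- Generators of the fundamental group of the Weber–Seifert dodecahedral space. -/
inductive Gen : Type
  | u | v | w | x | y | z
  deriving DecidableEq

open FreeGroup in
/-- The six relators of the Weber–Seifert presentation. -/
def wsRels : Set (FreeGroup Gen) :=
  { of .u * of .x * (of .y)⁻¹ * (of .v)⁻¹ * of .w,
    of .u * of .y * (of .z)⁻¹ * (of .w)⁻¹ * of .x,
    of .u * of .z * (of .v)⁻¹ * (of .x)⁻¹ * of .y,
    of .u * of .v * (of .w)⁻¹ * (of .y)⁻¹ * of .z,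
    of .u * of .w * (of .x)⁻¹ * (of .z)⁻¹ * of .v,
    of .v * of .x * of .z * of .w * of .y }

/-- The fundamental group of the Weber–Seifert hyperbolic dodecahedral space. -/
abbrev G : Type := PresentedGroup wsRels

def u : G := PresentedGroup.of Gen.u
def v : G := PresentedGroup.of Gen.v
def w : G := PresentedGroup.of Gen.w
def x : G := PresentedGroup.of Gen.x
def y : G := PresentedGroup.of Gen.y
def z : G := PresentedGroup.of Gen.z

/-- The class of a generator in the abelianization, written additively. -/
def abGen (g : Gen) : Additive (Abelianization G) :=
  Additive.ofMul (Abelianization.of (PresentedGroup.of g))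

/-- The values in `(ℤ/5)³` of the generators; `x`, `y`, `z` go to the standard basis. -/
def genVal : Gen → ZMod 5 × ZMod 5 × ZMod 5
  | .u => (2, 1, 2)
  | .v => (1, 2, -2)
  | .w => (-2, 2, 1)
  | .x => (1, 0, 0)
  | .y => (0, 1, 0)
  | .z => (0, 0, 1)

theorem genVal_rels : ∀ r ∈ wsRels,
    FreeGroup.lift (fun g => Multiplicative.ofAdd (genVal g)) r = 1 := by
  intro r hr
  simp only [wsRels, Set.mem_insert_iff, Set.mem_singleton_iff] at hr
  rcases hr with rfl | rfl | rfl | rfl | rfl | rfl <;>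
    simp only [map_mul, map_inv, FreeGroup.lift_apply_of] <;> decide

/-- The homomorphism from the abelianization of `G` to `(ℤ/5)³` determined by `genVal`. -/
def toZMod : Additive (Abelianization G) →+ ZMod 5 × ZMod 5 × ZMod 5 :=
  MonoidHom.toAdditiveLeft (Abelianization.lift (PresentedGroup.toGroup genVal_rels))

theorem toZMod_abGen (g : Gen) : toZMod (abGen g) = genVal g := by
  simp [toZMod, abGen]

/-- Every relator gives the corresponding relation among the classes `abGen`. -/
theorem lift_abGen_eq_one {r : FreeGroup Gen} (hr : r ∈ wsRels) :
    FreeGroup.lift (fun g => (abGen g).toMul) r = 1 := by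
  have h : FreeGroup.lift (fun g => (abGen g).toMul) =
      (Abelianization.of (G := G)).comp (PresentedGroup.mk wsRels) := by
    ext g
    simp [abGen, PresentedGroup.of]
  rw [h, MonoidHom.comp_apply, PresentedGroup.one_of_mem hr, map_one]

/-- The six relations, written additively. -/
theorem abGen_rels :
    abGen .u + abGen .x - abGen .y - abGen .v + abGen .w = 0 ∧
    abGen .u + abGen .y - abGen .z - abGen .w + abGen .x = 0 ∧
    abGen .u + abGen .z - abGen .v - abGen .x + abGen .y = 0 ∧
    abGen .u + abGen .v - abGen .w - abGen .y + abGen .z = 0 ∧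
    abGen .u + abGen .w - abGen .x - abGen .z + abGen .v = 0 ∧
    abGen .v + abGen .x + abGen .z + abGen .w + abGen .y = 0 := by
  refine ⟨?_, ?_, ?_, ?_, ?_, ?_⟩
  · have h := lift_abGen_eq_one (r := .of .u * .of .x * (.of .y)⁻¹ * (.of .v)⁻¹ * .of .w)
      (by simp [wsRels])
    simpa [sub_eq_add_neg] using congrArg Additive.ofMul h
  · have h := lift_abGen_eq_one (r := .of .u * .of .y * (.of .z)⁻¹ * (.of .w)⁻¹ * .of .x)
      (by simp [wsRels])
    simpa [sub_eq_add_neg] using congrArg Additive.ofMul h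
  · have h := lift_abGen_eq_one (r := .of .u * .of .z * (.of .v)⁻¹ * (.of .x)⁻¹ * .of .y)
      (by simp [wsRels])
    simpa [sub_eq_add_neg] using congrArg Additive.ofMul h
  · have h := lift_abGen_eq_one (r := .of .u * .of .v * (.of .w)⁻¹ * (.of .y)⁻¹ * .of .z)
      (by simp [wsRels])
    simpa [sub_eq_add_neg] using congrArg Additive.ofMul h
  · have h := lift_abGen_eq_one (r := .of .u * .of .w * (.of .x)⁻¹ * (.of .z)⁻¹ * .of .v)
      (by simp [wsRels])
    simpa [sub_eq_add_neg] using congrArg Additive.ofMul h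
  · have h := lift_abGen_eq_one (r := .of .v * .of .x * .of .z * .of .w * .of .y)
      (by simp [wsRels])
    simpa using congrArg Additive.ofMul h

theorem five_x : (5 : ℤ) • abGen .x = 0 := by
  obtain ⟨h1, h2, h3, h4, h5, h6⟩ := abGen_rels
  linear_combination (norm := module) h1 + h2 - h3 - h5 + h6

theorem five_y : (5 : ℤ) • abGen .y = 0 := by
  obtain ⟨h1, h2, h3, h4, h5, h6⟩ := abGen_rels
  linear_combination (norm := module) -h1 + h2 + h3 - h4 + h6

theorem five_z : (5 : ℤ) • abGen .z = 0 := by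
  obtain ⟨h1, h2, h3, h4, h5, h6⟩ := abGen_rels
  linear_combination (norm := module) -h2 + h3 + h4 - h5 + h6

theorem abGen_u :
    abGen .u = (2 : ℤ) • abGen .x + (1 : ℤ) • abGen .y + (2 : ℤ) • abGen .z := by
  obtain ⟨h1, h2, h3, h4, h5, h6⟩ := abGen_rels
  linear_combination (norm := module) h5 - h6

theorem abGen_v :
    abGen .v = (1 : ℤ) • abGen .x + (2 : ℤ) • abGen .y + (-2 : ℤ) • abGen .z := by
  obtain ⟨h1, h2, h3, h4, h5, h6⟩ := abGen_rels
  linear_combination (norm := module) -h2 + h4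

theorem abGen_w :
    abGen .w = (-2 : ℤ) • abGen .x + (2 : ℤ) • abGen .y + (1 : ℤ) • abGen .z := by
  obtain ⟨h1, h2, h3, h4, h5, h6⟩ := abGen_rels
  linear_combination (norm := module) h1 - h3

/-- The homomorphism `ℤ/5 → A` sending `1` to an element killed by `5`. -/
def zmodHom {A : Type*} [AddCommGroup A] (a : A) (ha : (5 : ℤ) • a = 0) : ZMod 5 →+ A :=
  ZMod.lift 5 ⟨zmultiplesHom A a, by simpa using ha⟩

theorem zmodHom_intCast {A : Type*} [AddCommGroup A] (a : A) (ha : (5 : ℤ) • a = 0) (n : ℤ) :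
    zmodHom a ha (n : ZMod 5) = n • a := by
  simp [zmodHom]

/-- The homomorphism from `(ℤ/5)³` sending the standard basis to the classes of `x`, `y`, `z`. -/
def fromZMod : ZMod 5 × ZMod 5 × ZMod 5 →+ Additive (Abelianization G) :=
  (zmodHom _ five_x).coprod ((zmodHom _ five_y).coprod (zmodHom _ five_z))

theorem fromZMod_intCast (a b c : ℤ) :
    fromZMod ((a : ZMod 5), (b : ZMod 5), (c : ZMod 5)) =
      a • abGen .x + b • abGen .y + c • abGen .z := by
  simp [fromZMod, zmodHom_intCast, add_assoc]

theorem fromZMod_genVal (g : Gen) : fromZMod (genVal g) = abGen g := by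
  cases g
  · rw [abGen_u, ← fromZMod_intCast]; rfl
  · rw [abGen_v, ← fromZMod_intCast]; rfl
  · rw [abGen_w, ← fromZMod_intCast]; rfl
  · simpa [genVal] using fromZMod_intCast 1 0 0
  · simpa [genVal] using fromZMod_intCast 0 1 0
  · simpa [genVal] using fromZMod_intCast 0 0 1

theorem fromZMod_toZMod (a : Additive (Abelianization G)) : fromZMod (toZMod a) = a := by
  have h : (AddMonoidHom.toMultiplicativeRight (fromZMod.comp toZMod) :
      Abelianization G →* Multiplicative (Additive (Abelianization G))) =
      AddMonoidHom.toMultiplicativeRight (AddMonoidHom.id _) := by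
    refine Abelianization.hom_ext _ _ (PresentedGroup.ext fun g => ?_)
    change fromZMod (toZMod (abGen g)) = abGen g
    rw [toZMod_abGen, fromZMod_genVal]
  exact DFunLike.congr_fun h a.toMul

theorem toZMod_fromZMod (p : ZMod 5 × ZMod 5 × ZMod 5) : toZMod (fromZMod p) = p := by
  obtain ⟨a, b, c⟩ := p
  obtain ⟨a, rfl⟩ := ZMod.intCast_surjective a
  obtain ⟨b, rfl⟩ := ZMod.intCast_surjective b
  obtain ⟨c, rfl⟩ := ZMod.intCast_surjective c
  simp [fromZMod_intCast, toZMod_abGen, genVal]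

/-- The abelianization of `G` (the first integral homology group of the Weber–Seifert
dodecahedral space) is isomorphic to `(ℤ/5ℤ)³`. -/
theorem ws_abelianization :
    Nonempty (Abelianization G ≃* Multiplicative (ZMod 5 × ZMod 5 × ZMod 5)) := by
  let e : Additive (Abelianization G) ≃+ ZMod 5 × ZMod 5 × ZMod 5 :=
    { toZMod with
      invFun := fromZMod
      left_inv := fromZMod_toZMod
      right_inv := toZMod_fromZMod }
  exact ⟨AddEquiv.toMultiplicativeRight e⟩
end

section
/- The set of subgroups of G of index 5, considered up to conjugacy in G, has exactly 38 elements. (Equivalently, the Weber–Seifert dodecahedral space has exactly 38 connected covers of degree 5.) -/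
/-- The symmetric group on five letters; products are composition of functions. -/
abbrev P5 : Type := Equiv.Perm (Fin 5)

/-! ### Decimal codes of permutations -/

/-- The decimal code `p₄p₃p₂p₁p₀` of a permutation `p` of `{0, …, 4}`; thus `43210` is the
identity. -/
def code (σ : P5) : ℕ :=
  σ 0 + 10 * σ 1 + 100 * σ 2 + 1000 * σ 3 + 10000 * σ 4

/-- The `i`-th decimal digit of `p`, i.e. the value at `i` of the permutation with code `p`.
The bare `Nat` functions are the ones the kernel evaluates on binary numerals. -/
def app (p i : ℕ) : ℕ := Nat.mod (Nat.div p (Nat.pow 10 i)) 10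

/-- Composition on codes. -/
def comp (p q : ℕ) : ℕ :=
  app p (app q 0) + 10 * app p (app q 1) + 100 * app p (app q 2) + 1000 * app p (app q 3) +
    10000 * app p (app q 4)

/-- Inversion on codes: the digit `i` goes to position `p i`. -/
def inv (p : ℕ) : ℕ :=
  10 ^ app p 1 + 2 * 10 ^ app p 2 + 3 * 10 ^ app p 3 + 4 * 10 ^ app p 4

theorem app_code (σ : P5) (i : Fin 5) : app (code σ) i = σ i := by
  revert σ; revert i; decide +kernel

theorem code_inj {σ τ : P5} (h : code σ = code τ) : σ = τ := by
  ext i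
  rw [← app_code σ, ← app_code τ, h]

theorem code_mul (σ τ : P5) : code (σ * τ) = comp (code σ) (code τ) := by
  have h (i : Fin 5) : app (code σ) (app (code τ) i) = (σ * τ) i := by
    rw [app_code, app_code]; rfl
  exact (congrArg₂ _ (congrArg₂ _ (congrArg₂ _ (congrArg₂ _ (h 0) (congrArg _ (h 1)))
    (congrArg _ (h 2))) (congrArg _ (h 3))) (congrArg _ (h 4))).symm

theorem code_inv (σ : P5) : code σ⁻¹ = inv (code σ) := by
  revert σ; decide +kernel

theorem code_one : code 1 = 43210 := by decide

/-- Codes of the even permutations, the identity first. -/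
def evens : List ℕ :=
  [43210, 24310, 32410, 34120, 41320, 13420, 42130, 14230, 21430, 23140,
   31240, 12340, 34201, 42301, 23401, 43021, 4321, 30421, 24031, 40231,
   2431, 32041, 3241, 20341, 43102, 14302, 31402, 34012, 40312, 3412,
   41032, 4132, 10432, 13042, 30142, 1342, 24103, 41203, 12403, 42013,
   4213, 20413, 14023, 40123, 1423, 21043, 2143, 10243, 32104, 13204,
   21304, 23014, 30214, 2314, 31024, 3124, 10324, 12034, 20134, 1234]

/-- Codes of the odd permutations. -/
def odds : List ℕ :=
  [34210, 42310, 23410, 43120, 14320, 31420, 24130, 41230, 12430, 32140,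
   13240, 21340, 43201, 24301, 32401, 34021, 40321, 3421, 42031, 4231,
   20431, 23041, 30241, 2341, 34102, 41302, 13402, 43012, 4312, 30412,
   14032, 40132, 1432, 31042, 3142, 10342, 42103, 14203, 21403, 24013,
   40213, 2413, 41023, 4123, 10423, 12043, 20143, 1243, 23104, 31204,
   12304, 32014, 3214, 20314, 13024, 30124, 1324, 21034, 2134, 10234]

/-- Codes of all permutations. -/
def alls : List ℕ := evens ++ odds

theorem code_mem_evens (σ : P5) : Equiv.Perm.sign σ = 1 → code σ ∈ evens := by
  revert σ; decide +kernel

theorem exists_code {p : ℕ} : p ∈ alls → ∃ σ : P5, code σ = p := by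
  revert p
  change ∀ p ∈ alls, _
  decide +kernel

/-- The permutation with a given code (an arbitrary one if there is none). -/
noncomputable def dec : ℕ → P5 := Function.invFun code

theorem code_dec {p : ℕ} (h : p ∈ alls) : code (dec p) = p :=
  Function.invFun_eq (exists_code h)

theorem code_mem_alls (σ : P5) : code σ ∈ alls := by
  revert σ; decide +kernel

/-- `s ∘ p = q ∘ s`, tested point by point. -/
def twists (s p q : ℕ) : Bool :=
  Nat.beq (app s (app p 0)) (app q (app s 0)) && (Nat.beq (app s (app p 1)) (app q (app s 1)) &&
  (Nat.beq (app s (app p 2)) (app q (app s 2)) && (Nat.beq (app s (app p 3)) (app q (app s 3)) &&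
  Nat.beq (app s (app p 4)) (app q (app s 4)))))

theorem twists_code (σ π ρ : P5) :
    twists (code σ) (code π) (code ρ) = true ↔ σ * π = ρ * σ := by
  have h (i : Fin 5) : Nat.beq (app (code σ) (app (code π) i)) (app (code ρ) (app (code σ) i)) = true
      ↔ (σ * π) i = (ρ * σ) i := by
    rw [app_code, app_code, app_code, app_code, Nat.beq_eq, Fin.val_inj]; rfl
  have h0 := h 0
  have h1 := h 1
  have h2 := h 2
  have h3 := h 3
  have h4 := h 4
  simp only [twists, Bool.and_eq_true]
  constructor
  · rintro ⟨k0, k1, k2, k3, k4⟩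
    ext i : 1
    fin_cases i
    exacts [h0.1 k0, h1.1 k1, h2.1 k2, h3.1 k3, h4.1 k4]
  · intro k
    rw [k] at h0 h1 h2 h3 h4
    exact ⟨h0.2 rfl, h1.2 rfl, h2.2 rfl, h3.2 rfl, h4.2 rfl⟩

/-! ### Six-tuples of permutations and the relators -/

/-- The family `Gen → ℕ` with the given values, listed in the cyclic order `x, y, z, v, w` under
which the presentation is invariant. -/
def tup (u x y z v w : ℕ) : Gen → ℕ
  | .u => u | .x => x | .y => y | .z => z | .v => v | .w => w

/-- The generators, as a list to be traversed by the Boolean tests. -/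
def gens : List Gen := [.u, .x, .y, .z, .v, .w]

theorem mem_gens (g : Gen) : g ∈ gens := by cases g <;> decide

/-- The relators hold for `f`, i.e. `f` defines a homomorphism `G →* P5`. -/
def Rels (f : Gen → P5) : Prop :=
  f .u * f .x * (f .y)⁻¹ * (f .v)⁻¹ * f .w = 1 ∧
  f .u * f .y * (f .z)⁻¹ * (f .w)⁻¹ * f .x = 1 ∧
  f .u * f .z * (f .v)⁻¹ * (f .x)⁻¹ * f .y = 1 ∧
  f .u * f .v * (f .w)⁻¹ * (f .y)⁻¹ * f .z = 1 ∧
  f .u * f .w * (f .x)⁻¹ * (f .z)⁻¹ * f .v = 1 ∧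
  f .v * f .x * f .z * f .w * f .y = 1

theorem rels_iff (f : Gen → P5) : Rels f ↔ ∀ r ∈ wsRels, FreeGroup.lift f r = 1 := by
  simp [Rels, wsRels]

/-- `Rels` on codes. -/
def relsB (f : Gen → ℕ) : Bool :=
  Nat.beq (comp (comp (comp (comp (f .u) (f .x)) (inv (f .y))) (inv (f .v))) (f .w)) 43210 &&
  (Nat.beq (comp (comp (comp (comp (f .u) (f .y)) (inv (f .z))) (inv (f .w))) (f .x)) 43210 &&
  (Nat.beq (comp (comp (comp (comp (f .u) (f .z)) (inv (f .v))) (inv (f .x))) (f .y)) 43210 &&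
  (Nat.beq (comp (comp (comp (comp (f .u) (f .v)) (inv (f .w))) (inv (f .y))) (f .z)) 43210 &&
  (Nat.beq (comp (comp (comp (comp (f .u) (f .w)) (inv (f .x))) (inv (f .z))) (f .v)) 43210 &&
  Nat.beq (comp (comp (comp (comp (f .v) (f .x)) (f .z)) (f .w)) (f .y)) 43210))))

theorem relsB_code (f : Gen → P5) : relsB (fun g => code (f g)) = true ↔ Rels f := by
  have h (σ : P5) : code σ = code 1 ↔ σ = 1 := ⟨code_inj, congrArg _⟩
  simp only [relsB, Bool.and_eq_true, Nat.beq_eq, ← code_mul, ← code_inv, ← code_one, h, Rels]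

/-- Every permutation representation of `G` consists of even permutations: in `ℤˣ` the first five
relators make the sign of `u` trivial and those of `x, y, z, v, w` equal, and the last relator makes
the fifth power of their common value trivial. -/
theorem sign_eq_one {f : Gen → P5} (h : Rels f) (g : Gen) : Equiv.Perm.sign (f g) = 1 := by
  obtain ⟨h1, h2, h3, h4, h5, h6⟩ := h
  replace h1 := congrArg Equiv.Perm.sign h1
  replace h2 := congrArg Equiv.Perm.sign h2
  replace h3 := congrArg Equiv.Perm.sign h3
  replace h4 := congrArg Equiv.Perm.sign h4
  replace h5 := congrArg Equiv.Perm.sign h5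
  replace h6 := congrArg Equiv.Perm.sign h6
  simp only [map_mul, map_inv, map_one] at h1 h2 h3 h4 h5 h6
  have key : ∀ u x y z v w : ℤˣ, u * x * y⁻¹ * v⁻¹ * w = 1 → u * y * z⁻¹ * w⁻¹ * x = 1 →
      u * z * v⁻¹ * x⁻¹ * y = 1 → u * v * w⁻¹ * y⁻¹ * z = 1 → u * w * x⁻¹ * z⁻¹ * v = 1 →
      v * x * z * w * y = 1 → u = 1 ∧ x = 1 ∧ y = 1 ∧ z = 1 ∧ v = 1 ∧ w = 1 := by
    intro u x y z v w
    rcases Int.units_eq_one_or u with rfl | rfl <;> rcases Int.units_eq_one_or x with rfl | rfl <;>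
    rcases Int.units_eq_one_or y with rfl | rfl <;> rcases Int.units_eq_one_or z with rfl | rfl <;>
    rcases Int.units_eq_one_or v with rfl | rfl <;> rcases Int.units_eq_one_or w with rfl | rfl <;>
    simp
  obtain ⟨ku, kx, ky, kz, kv, kw⟩ := key _ _ _ _ _ _ h1 h2 h3 h4 h5 h6
  cases g <;> assumption

/-! ### The list of representatives and the search -/

/-- Codes of the values on the generators of 38 transitive representations, one for each
conjugacy class. -/
def reps : List (Gen → ℕ) :=
  [tup 43210 43210 4321 10432 21043 32104,
   tup 43210 4321 43210 32104 21043 10432,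
   tup 43210 4321 4321 4321 4321 4321,
   tup 43210 4321 10432 21043 32104 43210,
   tup 43210 4321 21043 43210 10432 32104,
   tup 43210 4321 32104 10432 43210 21043,
   tup 34120 34201 42301 4321 2314 3124,
   tup 34120 34201 40123 20413 24103 23401,
   tup 34120 42301 34201 3124 2314 32104,
   tup 34120 42301 4321 2314 3124 34201,
   tup 34120 4321 2314 3124 34201 42301,
   tup 4321 43210 43210 21043 32104 21043,
   tup 4321 43210 4321 43210 10432 10432,
   tup 4321 43210 10432 10432 43210 4321,
   tup 4321 43210 21043 32104 21043 43210,
   tup 4321 43210 32104 4321 4321 32104,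
   tup 4321 34120 2314 34201 3124 42301,
   tup 4321 4321 43210 10432 10432 43210,
   tup 4321 4321 4321 32104 43210 32104,
   tup 4321 4321 10432 4321 21043 21043,
   tup 4321 4321 21043 21043 4321 10432,
   tup 4321 4321 32104 43210 32104 4321,
   tup 4321 31402 12403 12034 20134 30142,
   tup 4321 10432 43210 4321 43210 10432,
   tup 4321 10432 4321 21043 21043 4321,
   tup 4321 10432 10432 43210 4321 43210,
   tup 4321 10432 21043 10432 32104 32104,
   tup 4321 10432 32104 32104 10432 21043,
   tup 4321 21043 43210 43210 21043 32104,
   tup 4321 21043 4321 10432 4321 21043,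
   tup 4321 21043 10432 32104 32104 10432,
   tup 4321 21043 21043 4321 10432 4321,
   tup 4321 21043 32104 21043 43210 43210,
   tup 4321 32104 43210 32104 4321 4321,
   tup 4321 32104 4321 4321 32104 43210,
   tup 4321 32104 10432 21043 10432 32104,
   tup 4321 32104 21043 43210 43210 21043,
   tup 4321 32104 32104 10432 21043 10432]

/-- Bit masks of the proper subsets of `{0, …, 4}` containing `0`. -/
def masks : List ℕ := [1, 3, 5, 7, 9, 11, 13, 15, 17, 19, 21, 23, 25, 27, 29]

/-- `f` preserves a proper subset containing `0`. -/
def intransB (f : Gen → ℕ) : Bool :=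
  masks.any fun m => gens.all fun g => (List.range 5).all fun i =>
    Nat.testBit m i == Nat.testBit m (app (f g) i)

/-- `f` is conjugate to a member of the list `reps` with the same values at `u` and `x`. -/
def listedB (f : Gen → ℕ) : Bool :=
  reps.any fun r => Nat.beq (r .u) (f .u) && (Nat.beq (r .x) (f .x) &&
    alls.any fun s => gens.all fun g => twists s (f g) (r g))

/-- Equal to `k n`; makes the kernel evaluate `n` to a numeral before substituting it. -/
def force (n : ℕ) (k : ℕ → Bool) : Bool :=
  Nat.rec (k 0) (fun m _ => k (Nat.succ m)) n

theorem force_eq (n : ℕ) (k : ℕ → Bool) : force n k = k n := by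
  cases n <;> rfl

/-- The equation `y w = w d w e w c` at the point `j`. With `c = u x y⁻¹`, `d = c u` and
`e = x⁻¹ u` it is the relator `u v w⁻¹ y⁻¹ z` after elimination of `v` and `z`, and it
rejects most candidates cheaply. -/
def chk (c d e y w j : ℕ) : Bool :=
  Nat.beq (app y (app w j)) (app w (app d (app w (app e (app w (app c j))))))

/-- The candidate with given `u, x, y, w` violates a relator, is intransitive, or is conjugate to a
member of `reps`. The relators force `v = w c` and `z = v u w x⁻¹`, where `c = u x y⁻¹`. -/
def stepB (u x c d e y w : ℕ) : Bool :=
  !(chk c d e y w 0 && (chk c d e y w 1 && (chk c d e y w 2 && (chk c d e y w 3 &&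
    chk c d e y w 4)))) ||
  force (comp w c) fun v => force (comp (comp (comp v u) w) (inv x)) fun z =>
    !relsB (tup u x y z v w) || (intransB (tup u x y z v w) || listedB (tup u x y z v w))

/-- The search through all even `y`, `w` for given `u` and all `x` in a list. -/
def searchB (u : ℕ) (xs : List ℕ) : Bool :=
  xs.all fun x => evens.all fun y =>
    force (comp (comp u x) (inv y)) fun c => force (comp c u) fun d =>
      force (comp (inv x) u) fun e => evens.all fun w => stepB u x c d e y w

/-- Representatives of the pairs `(u, x)` of even permutations up to simultaneous conjugation,
grouped by `u`. -/
def pairs : List (ℕ × List ℕ) :=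
  [(43210,
    [43210, 24310, 34120, 4321]),
   (24310,
    [43210, 24310, 32410, 34120, 41320, 13420, 34201,
     43021, 4321, 30421, 41032, 4132, 10432]),
   (34120,
    [43210, 24310, 34120, 21430, 34201, 42301, 43021,
     4321, 24031, 40231, 2431]),
   (4321,
    [43210, 24310, 32410, 34120, 13420, 21430, 23140,
     12340, 4321, 30421, 24031, 32041, 31402, 10432,
     21043, 32104])]

theorem search_0 : searchB 43210 [43210, 24310, 34120, 4321] = true := by
  decide +kernel

theorem search_1 : searchB 24310 [43210, 24310, 32410, 34120, 41320, 13420, 34201,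
     43021, 4321, 30421, 41032, 4132, 10432] = true := by
  decide +kernel

theorem search_2 : searchB 34120 [43210, 24310, 34120, 21430, 34201, 42301, 43021,
     4321, 24031, 40231, 2431] = true := by
  decide +kernel

theorem search_3 : searchB 4321 [43210, 24310, 32410, 34120, 13420, 21430, 23140,
     12340, 4321, 30421, 24031, 32041, 31402, 10432,
     21043, 32104] = true := by
  decide +kernel

/-- The members of a list are pairwise non-conjugate. -/
def distinctB : List (Gen → ℕ) → Bool
  | [] => true
  | r :: l => (l.all fun r' => alls.all fun s => !gens.all fun g => twists s (r g) (r' g)) &&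
      distinctB l

/-- `p` is the code of a 5-cycle. -/
def cycleB (p : ℕ) : Bool :=
  (List.range 5).all fun i => (List.range 5).any fun k => Nat.beq ((app p)^[k] 0) i

/-- Every even permutation is conjugate to the first entry of some member of `pairs`. -/
theorem normal_u : (evens.all fun p => alls.any fun s => pairs.any fun r => twists s p r.1) =
    true := by
  decide +kernel

/-- Every even permutation is conjugate to an entry of the list attached to a given `u`, by an
element of the centralizer of `u`. -/
theorem normal_x : (pairs.all fun r => evens.all fun p => alls.any fun s =>
    twists s r.1 r.1 && r.2.any fun q => twists s p q) = true := by
  decide +kernel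

theorem reps_rels : (reps.all fun r => relsB r && gens.all fun g => alls.contains (r g)) = true := by
  decide +kernel

theorem reps_cycle : (reps.all fun r => gens.any fun g => cycleB (r g)) = true := by
  decide +kernel

theorem reps_distinct : distinctB reps = true := by
  decide +kernel

/-! ### Subgroups of index five and permutation representations -/

/-- Transitivity of the action on five points given by `φ`. -/
def ActsTransitively (φ : G →* P5) : Prop := ∀ i j, ∃ g, φ g i = j

/-- Simultaneous conjugacy in the symmetric group. -/
def Equivalent (φ ψ : G →* P5) : Prop := ∃ σ : P5, ∀ g, σ * φ g = ψ g * σ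

/-- The stabilizer of the point `0`. -/
def stab (φ : G →* P5) : Subgroup G := (MulAction.stabilizer P5 (0 : Fin 5)).comap φ

theorem mem_stab {φ : G →* P5} {g : G} : g ∈ stab φ ↔ φ g 0 = 0 := by
  simp [stab, MulAction.mem_stabilizer_iff]

theorem stab_index {φ : G →* P5} (h : ActsTransitively φ) : (stab φ).index = 5 := by
  let _ := MulAction.compHom (Fin 5) φ
  have h1 : stab φ = MulAction.stabilizer G (0 : Fin 5) := by
    ext g
    rw [mem_stab, MulAction.mem_stabilizer_iff]; rfl
  have h2 : MulAction.orbit G (0 : Fin 5) = Set.univ :=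
    Set.eq_univ_of_forall fun j => h 0 j
  rw [h1, MulAction.index_stabilizer, h2, Set.ncard_univ, Nat.card_eq_fintype_card,
    Fintype.card_fin]

/-- The representation is the action on `G ⧸ K`, with the coset of `1` numbered `0`. -/
theorem exists_stab {K : Subgroup G} (hK : K.index = 5) :
    ∃ φ, ActsTransitively φ ∧ stab φ = K := by
  have hf : Finite (G ⧸ K) := Nat.finite_of_card_ne_zero (by
    change K.index ≠ 0
    omega)
  let e₀ : G ⧸ K ≃ Fin 5 := Finite.equivFinOfCardEq hK
  let e : G ⧸ K ≃ Fin 5 := e₀.trans (Equiv.swap (e₀ ((1 : G) : G ⧸ K)) 0)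
  have he : e ((1 : G) : G ⧸ K) = 0 := by simp [e]
  let φ : G →* P5 := e.permCongrHom.toMonoidHom.comp (MulAction.toPermHom G (G ⧸ K))
  have hφ (g : G) (c : G ⧸ K) : φ g (e c) = e (g • c) := by
    simp [φ, Equiv.permCongrHom]
  refine ⟨φ, fun i j => ?_, ?_⟩
  · obtain ⟨a, ha⟩ := MulAction.exists_smul_eq G (e.symm i) (e.symm j)
    refine ⟨a, ?_⟩
    rw [← e.apply_symm_apply i, hφ, ha, e.apply_symm_apply]
  · ext g
    rw [mem_stab, ← he, hφ, e.apply_eq_iff_eq, MulAction.Quotient.smul_coe, QuotientGroup.eq]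
    simp

theorem Equivalent.conj_stab {φ ψ : G →* P5} (h : Equivalent φ ψ) (hψ : ActsTransitively ψ) :
    ∃ g : G, Subgroup.map (MulAut.conj g).toMonoidHom (stab φ) = stab ψ := by
  obtain ⟨σ, hσ⟩ := h
  replace hσ (g : G) (i : Fin 5) : σ (φ g i) = ψ g (σ i) := congrArg (· i) (hσ g)
  obtain ⟨a, ha⟩ := hψ (σ 0) 0
  refine ⟨a, ?_⟩
  ext g
  rw [Subgroup.mem_map_equiv, mem_stab, mem_stab, ← σ.apply_eq_iff_eq, hσ, ← (ψ a).apply_eq_iff_eq,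
    ha, MulAut.conj_symm_apply, map_mul, map_mul, map_inv]
  simp [ha]

/-- The intertwiner sends `φ h 0` to `ψ (h a⁻¹) 0`, where `a` conjugates one stabilizer into the
other. -/
theorem equivalent_of_conj {φ ψ : G →* P5} (hφ : ActsTransitively φ) {a : G}
    (h : Subgroup.map (MulAut.conj a).toMonoidHom (stab φ) = stab ψ) : Equivalent φ ψ := by
  have key (b c : G) : φ b 0 = φ c 0 ↔ ψ (b * a⁻¹) 0 = ψ (c * a⁻¹) 0 := by
    have h1 : c⁻¹ * b ∈ stab φ ↔ (c * a⁻¹)⁻¹ * (b * a⁻¹) ∈ stab ψ := by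
      rw [← h, Subgroup.mem_map_equiv, MulAut.conj_symm_apply]
      group
    rw [mem_stab, mem_stab, map_mul, map_mul ψ, map_inv, map_inv, Equiv.Perm.mul_apply,
      Equiv.Perm.mul_apply, Equiv.Perm.inv_eq_iff_eq, Equiv.Perm.inv_eq_iff_eq] at h1
    rw [h1]
  choose t ht using hφ 0
  have inj : Function.Injective fun i => ψ (t i * a⁻¹) 0 := fun i j hij => by
    rw [← ht i, ← ht j]
    exact (key _ _).2 hij
  refine ⟨Equiv.ofBijective _ (Finite.injective_iff_bijective.1 inj), fun g => ?_⟩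
  ext i : 1
  change ψ (t (φ g i) * a⁻¹) 0 = ψ g (ψ (t i * a⁻¹) 0)
  rw [← Equiv.Perm.mul_apply, ← map_mul, ← mul_assoc]
  apply (key _ _).1
  rw [ht, map_mul, Equiv.Perm.mul_apply, ht]

theorem Equivalent.symm {φ ψ : G →* P5} (h : Equivalent φ ψ) : Equivalent ψ φ := by
  obtain ⟨σ, hσ⟩ := h
  exact ⟨σ⁻¹, fun g => by rw [inv_mul_eq_iff_eq_mul, ← mul_assoc, hσ, mul_inv_cancel_right]⟩

theorem Equivalent.trans {φ ψ χ : G →* P5} (h : Equivalent φ ψ) (k : Equivalent ψ χ) :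
    Equivalent φ χ := by
  obtain ⟨σ, hσ⟩ := h
  obtain ⟨τ, hτ⟩ := k
  exact ⟨τ * σ, fun g => by rw [mul_assoc, hσ, ← mul_assoc, hτ, mul_assoc]⟩

theorem equivalent_conj (φ : G →* P5) (σ : P5) :
    Equivalent φ ((MulAut.conj σ).toMonoidHom.comp φ) :=
  ⟨σ, fun g => by simp⟩

theorem ActsTransitively.conj {φ : G →* P5} (h : ActsTransitively φ) (σ : P5) :
    ActsTransitively ((MulAut.conj σ).toMonoidHom.comp φ) := fun i j => by
  obtain ⟨g, hg⟩ := h (σ⁻¹ i) (σ⁻¹ j)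
  refine ⟨g, ?_⟩
  change σ (φ g (σ⁻¹ i)) = j
  rw [hg]
  exact σ.apply_symm_apply j

/-- An intertwiner on the generators is an intertwiner. -/
theorem equivalent_of_gens {φ ψ : G →* P5} (σ : P5)
    (h : ∀ g, σ * φ (PresentedGroup.of g) = ψ (PresentedGroup.of g) * σ) : Equivalent φ ψ := by
  have : (MulAut.conj σ).toMonoidHom.comp φ = ψ := PresentedGroup.ext fun g => by
    simp [h]
  exact this ▸ equivalent_conj φ σ

/-- The images of the generators. -/
def vals (φ : G →* P5) (g : Gen) : P5 := φ (PresentedGroup.of g)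

theorem vals_rels (φ : G →* P5) : Rels (vals φ) := by
  rw [rels_iff]
  intro r hr
  have : FreeGroup.lift (vals φ) = φ.comp (PresentedGroup.mk wsRels) := by
    ext g; simp [vals, PresentedGroup.of]
  rw [this, MonoidHom.comp_apply, PresentedGroup.one_of_mem hr, map_one]

/-- The codes of the images of the generators. -/
def codes (φ : G →* P5) (g : Gen) : ℕ := code (vals φ g)

theorem codes_mem (φ : G →* P5) (g : Gen) : codes φ g ∈ evens :=
  code_mem_evens _ (sign_eq_one (vals_rels φ) g)

/-! ### Completeness of the list -/

theorem pairs_mem : ∀ r ∈ pairs, r.1 ∈ alls ∧ ∀ q ∈ r.2, q ∈ alls := by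
  decide +kernel

theorem codes_conj {φ : G →* P5} {σ : P5} {g : Gen} {q : ℕ} (hq : q ∈ alls)
    (h : twists (code σ) (codes φ g) q = true) :
    codes ((MulAut.conj σ).toMonoidHom.comp φ) g = q := by
  obtain ⟨ρ, rfl⟩ := exists_code hq
  refine congrArg code (?_ : σ * vals φ g * σ⁻¹ = ρ)
  rw [codes, twists_code] at h
  rw [h, mul_inv_cancel_right]

/-- Every transitive representation is equivalent to one whose pair of values at `u`, `x` is on
the list `pairs`. -/
theorem exists_normal {φ : G →* P5} (h : ActsTransitively φ) :
    ∃ φ', Equivalent φ φ' ∧ ActsTransitively φ' ∧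
      ∃ r ∈ pairs, codes φ' .u = r.1 ∧ codes φ' .x ∈ r.2 := by
  have hnu := normal_u
  have hnx := normal_x
  simp only [List.all_eq_true, List.any_eq_true, Bool.and_eq_true] at hnu hnx
  -- First `u` is brought to normal form, then `x` by an element centralizing `u`.
  obtain ⟨s, hs, r, hr, hsr⟩ := hnu _ (codes_mem φ .u)
  obtain ⟨σ, rfl⟩ := exists_code hs
  have hu := codes_conj (pairs_mem r hr).1 hsr
  obtain ⟨t, ht, htr, q, hq, htq⟩ :=
    hnx r hr _ (codes_mem ((MulAut.conj σ).toMonoidHom.comp φ) .x)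
  obtain ⟨τ, rfl⟩ := exists_code ht
  refine ⟨_, (equivalent_conj φ σ).trans (equivalent_conj _ τ), (h.conj σ).conj τ, r, hr, ?_, ?_⟩
  · exact codes_conj (pairs_mem r hr).1 (hu.symm ▸ htr)
  · rwa [codes_conj ((pairs_mem r hr).2 q hq) htq]

/-- An invariant proper subset containing `0` would contain the orbit of `0`. -/
theorem not_intransB {φ : G →* P5} (h : ActsTransitively φ) : intransB (codes φ) = false := by
  by_contra hc
  simp only [intransB, Bool.not_eq_false, List.any_eq_true, List.all_eq_true, beq_iff_eq,
    List.mem_range] at hc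
  obtain ⟨m, hm, hinv⟩ := hc
  have hproper : ∀ m ∈ masks, Nat.testBit m 0 = true ∧ ∃ i : Fin 5, Nat.testBit m i = false := by
    decide
  obtain ⟨h0, j, hj⟩ := hproper m hm
  -- The elements preserving the subset with mask `m` form a subgroup containing the generators.
  let H : Subgroup G :=
    { carrier := {g | ∀ i : Fin 5, Nat.testBit m i = Nat.testBit m (φ g i)}
      one_mem' := by simp
      mul_mem' := fun {a b} ha hb i => by
        rw [map_mul, Equiv.Perm.mul_apply, ← ha, ← hb]
      inv_mem' := fun {a} ha i => by
        rw [ha (φ a⁻¹ i), ← Equiv.Perm.mul_apply, ← map_mul, mul_inv_cancel, map_one]; rfl }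
  have hH : H = ⊤ := by
    rw [eq_top_iff, ← PresentedGroup.closure_range_of, Subgroup.closure_le]
    rintro _ ⟨g, rfl⟩ i
    rw [hinv g (mem_gens g) i i.2, codes, app_code]; rfl
  obtain ⟨g, hg⟩ := h 0 j
  have hg' : ∀ i : Fin 5, Nat.testBit m i = Nat.testBit m (φ g i) := by
    change g ∈ H
    rw [hH]; trivial
  have := hg' 0
  rw [hg, hj] at this
  simp [h0] at this

theorem search_all {r : ℕ × List ℕ} (hr : r ∈ pairs) : searchB r.1 r.2 = true := by
  simp only [pairs, List.mem_cons, List.not_mem_nil, or_false] at hr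
  rcases hr with rfl | rfl | rfl | rfl
  exacts [search_0, search_1, search_2, search_3]

/-- The search, applied to the values of an actual transitive representation, puts it on the list. -/
theorem listedB_of_normal {φ : G →* P5} (h : ActsTransitively φ) {r : ℕ × List ℕ} (hr : r ∈ pairs)
    (hu : codes φ .u = r.1) (hx : codes φ .x ∈ r.2) : listedB (codes φ) = true := by
  have hs := search_all hr
  simp only [searchB, List.all_eq_true, force_eq] at hs
  have hs := hs _ hx _ (codes_mem φ .y) _ (codes_mem φ .w)
  obtain ⟨h1, -, -, h4, h5, -⟩ := vals_rels φ
  have hv : vals φ .v = vals φ .w * (vals φ .u * vals φ .x * (vals φ .y)⁻¹) := by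
    rw [mul_eq_one_iff_eq_inv, mul_inv_eq_iff_eq_mul] at h1
    rw [h1]; group
  have hz : vals φ .z = vals φ .v * vals φ .u * vals φ .w * (vals φ .x)⁻¹ := by
    rw [mul_eq_one_iff_eq_inv, mul_inv_eq_iff_eq_mul, eq_inv_mul_iff_mul_eq] at h5
    rw [mul_assoc, mul_assoc, ← mul_assoc (vals φ .u), h5]
  have hy : vals φ .y * vals φ .w =
      vals φ .w * ((vals φ .u * vals φ .x * (vals φ .y)⁻¹) * vals φ .u) * vals φ .w *
        ((vals φ .x)⁻¹ * vals φ .u) * vals φ .w * (vals φ .u * vals φ .x * (vals φ .y)⁻¹) := by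
    have h4' : vals φ .y * vals φ .w = vals φ .z * vals φ .u * vals φ .v := by
      rw [mul_eq_one_iff_eq_inv, mul_inv_eq_iff_eq_mul, mul_inv_eq_iff_eq_mul] at h4
      rw [mul_assoc, h4]; group
    rw [h4', hz, hv]; group
  have hv' := congrArg code hv
  have hz' := congrArg code hz
  simp only [code_mul, code_inv] at hv' hz'
  have htup : tup (codes φ .u) (codes φ .x) (codes φ .y) (codes φ .z) (codes φ .v) (codes φ .w) =
      codes φ := by
    funext g; cases g <;> rfl
  have hrel : relsB (codes φ) = true := (relsB_code _).2 (vals_rels φ)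
  have hchk (j : Fin 5) : chk (comp (comp r.1 (codes φ .x)) (inv (codes φ .y)))
      (comp (comp (comp r.1 (codes φ .x)) (inv (codes φ .y))) r.1) (comp (inv (codes φ .x)) r.1)
      (codes φ .y) (codes φ .w) j = true := by
    simp only [chk, Nat.beq_eq, ← hu, codes, ← code_mul, ← code_inv, app_code, Fin.val_inj]
    exact congrArg (· j) hy
  simp only [stepB, force_eq] at hs
  rw [← hu] at hs hchk
  have e1 : comp (codes φ .w) (comp (comp (codes φ .u) (codes φ .x)) (inv (codes φ .y))) =
      codes φ .v := hv'.symm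
  have e2 : comp (comp (comp (codes φ .v) (codes φ .u)) (codes φ .w)) (inv (codes φ .x)) =
      codes φ .z := hz'.symm
  have hc0 := hchk 0
  have hc1 := hchk 1
  have hc2 := hchk 2
  have hc3 := hchk 3
  have hc4 := hchk 4
  simp only [Fin.isValue, Fin.coe_ofNat_eq_mod, Nat.zero_mod, Nat.one_mod, Nat.reduceMod]
    at hc0 hc1 hc2 hc3 hc4
  -- The checks pass, the relators hold and the action is transitive: only `listedB` is left.
  rw [e1, e2, htup, hrel, not_intransB h, hc0, hc1, hc2, hc3, hc4] at hs
  simpa using hs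

/-! ### The listed representations -/

theorem reps_get {r : Gen → ℕ} (hr : r ∈ reps) :
    relsB r = true ∧ (∀ g, r g ∈ alls) ∧ ∃ g, cycleB (r g) = true := by
  have h1 := reps_rels
  have h2 := reps_cycle
  simp only [List.all_eq_true, Bool.and_eq_true, List.any_eq_true, List.contains_eq_mem,
    decide_eq_true_eq] at h1 h2
  obtain ⟨g, -, hg⟩ := h2 r hr
  exact ⟨(h1 r hr).1, fun g => (h1 r hr).2 g (mem_gens g), g, hg⟩

/-- Transitivity holds because some generator acts as a 5-cycle. -/
theorem exists_rep {r : Gen → ℕ} (hr : r ∈ reps) :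
    ∃ φ : G →* P5, codes φ = r ∧ ActsTransitively φ := by
  obtain ⟨h1, h2, g, hg⟩ := reps_get hr
  have hd : (fun g => code (dec (r g))) = r := funext fun g => code_dec (h2 g)
  have hrel : Rels fun g => dec (r g) := (relsB_code _).1 (hd.symm ▸ h1)
  refine ⟨PresentedGroup.toGroup ((rels_iff _).1 hrel), ?_, ?_⟩
  · funext g
    simpa [codes, vals] using code_dec (h2 g)
  set φ : G →* P5 := PresentedGroup.toGroup ((rels_iff _).1 hrel) with hφ
  have hcode : r g = code (φ (PresentedGroup.of g)) := by
    simp [hφ, code_dec (h2 g)]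
  have hiter (k : ℕ) (σ : P5) : (app (code σ))^[k] 0 = ((σ ^ k) 0 : Fin 5) := by
    induction k with
    | zero => rfl
    | succ k ih => rw [Function.iterate_succ_apply', ih, app_code, pow_succ']; rfl
  -- The powers of a generator acting as a 5-cycle move `0` to every point.
  have h0 (i : Fin 5) : ∃ a : G, φ a 0 = i := by
    simp only [cycleB, List.all_eq_true, List.any_eq_true, List.mem_range, Nat.beq_eq] at hg
    obtain ⟨k, -, hk⟩ := hg i i.2
    refine ⟨PresentedGroup.of g ^ k, Fin.ext ?_⟩
    rw [map_pow, ← hk, hcode, hiter]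
  intro i j
  obtain ⟨a, rfl⟩ := h0 i
  obtain ⟨b, rfl⟩ := h0 j
  exact ⟨b * a⁻¹, by rw [← Equiv.Perm.mul_apply, ← map_mul, inv_mul_cancel_right]⟩

theorem reps_length : reps.length = 38 := rfl

/-- The representation number `i` on the list. -/
noncomputable def rep (i : Fin reps.length) : G →* P5 := (exists_rep (reps.get_mem i)).choose

theorem codes_rep (i : Fin reps.length) : codes (rep i) = reps.get i :=
  (exists_rep (reps.get_mem i)).choose_spec.1

theorem rep_trans (i : Fin reps.length) : ActsTransitively (rep i) :=
  (exists_rep (reps.get_mem i)).choose_spec.2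

theorem exists_equivalent_rep {φ : G →* P5} (h : ActsTransitively φ) :
    ∃ i, Equivalent φ (rep i) := by
  obtain ⟨φ', he, ht, r, hr, hu, hx⟩ := exists_normal h
  have hl := listedB_of_normal ht hr hu hx
  simp only [listedB, List.any_eq_true, List.all_eq_true, Bool.and_eq_true] at hl
  obtain ⟨r, hr, -, -, s, hs, htw⟩ := hl
  obtain ⟨σ, rfl⟩ := exists_code hs
  obtain ⟨i, rfl⟩ := List.get_of_mem hr
  refine ⟨i, he.trans (equivalent_of_gens σ fun g => ?_)⟩
  have := htw g (mem_gens g)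
  rwa [← codes_rep, codes, codes, twists_code] at this

theorem pairwise_of_distinctB : ∀ {l : List (Gen → ℕ)}, distinctB l = true →
    l.Pairwise fun r r' => ∀ s ∈ alls, ∃ g, twists s (r g) (r' g) = false
  | [], _ => List.Pairwise.nil
  | r :: l, h => by
    simp only [distinctB, Bool.and_eq_true, List.all_eq_true, Bool.not_eq_true',
      List.all_eq_false, Bool.not_eq_true] at h
    refine List.Pairwise.cons (fun r' hr' s hs => ?_) (pairwise_of_distinctB h.2)
    obtain ⟨g, -, hg⟩ := h.1 r' hr' s hs
    exact ⟨g, hg⟩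

theorem not_equivalent_of_lt {i j : Fin reps.length} (hij : i < j) :
    ¬ Equivalent (rep i) (rep j) := by
  rintro ⟨σ, hσ⟩
  obtain ⟨g, hg⟩ := List.pairwise_iff_get.1 (pairwise_of_distinctB reps_distinct) i j hij
    (code σ) (code_mem_alls σ)
  have := (twists_code σ (vals (rep i) g) (vals (rep j) g)).2 (hσ (PresentedGroup.of g))
  rw [← codes_rep, ← codes_rep, codes, codes, this] at hg
  cases hg

theorem rep_inj {i j : Fin reps.length} (h : Equivalent (rep i) (rep j)) : i = j := by
  rcases lt_trichotomy i j with hij | hij | hij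
  · exact (not_equivalent_of_lt hij h).elim
  · exact hij
  · exact (not_equivalent_of_lt hij h.symm).elim

/-- `G` has exactly 38 conjugacy classes of subgroups of index 5. -/
theorem ws_index_five_subgroups :
    Nat.card (Quot (fun K₁ K₂ : {K : Subgroup G // K.index = 5} =>
      ∃ g : G, Subgroup.map (MulAut.conj g).toMonoidHom K₁.1 = K₂.1)) = 38 := by
  have heqv : Equivalence (fun K₁ K₂ : {K : Subgroup G // K.index = 5} =>
      ∃ g : G, Subgroup.map (MulAut.conj g).toMonoidHom K₁.1 = K₂.1) := by
    refine ⟨fun K => ⟨1, ?_⟩, ?_, ?_⟩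
    · ext a; simp
    · rintro K L ⟨g, hg⟩
      refine ⟨g⁻¹, ?_⟩
      rw [← hg, Subgroup.map_map]
      ext a
      simp [mul_assoc]
    · rintro K L M ⟨g, hg⟩ ⟨k, hk⟩
      refine ⟨k * g, ?_⟩
      rw [← hk, ← hg, Subgroup.map_map]
      congr 1
      ext a
      simp
  have hbij : Function.Bijective fun i : Fin reps.length =>
      Quot.mk (fun K₁ K₂ : {K : Subgroup G // K.index = 5} =>
        ∃ g : G, Subgroup.map (MulAut.conj g).toMonoidHom K₁.1 = K₂.1)
        ⟨stab (rep i), stab_index (rep_trans i)⟩ := by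
    constructor
    · intro i j hij
      obtain ⟨a, ha⟩ := heqv.eqvGen_iff.1 (Quot.eqvGen_exact hij)
      exact rep_inj (equivalent_of_conj (rep_trans i) ha)
    · rintro ⟨K, hK⟩
      obtain ⟨φ, hφ, rfl⟩ := exists_stab hK
      obtain ⟨i, hi⟩ := exists_equivalent_rep hφ
      exact ⟨i, Quot.sound (hi.symm.conj_stab hφ)⟩
  rw [← Nat.card_congr (Equiv.ofBijective _ hbij), Nat.card_fin, reps_length]
end

section
/- G has a subgroup of index 5 whose abelianization is isomorphic to ℤ⁴ × (ℤ/3ℤ)². (This corresponds to Hempel's 5-sheeted cover of the Weber–Seifert dodecahedral space with positive first Betti number.) -/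
section HempelCover

open Equiv

/-! ### Homomorphisms to a wreath product as solutions of a linear system -/

/-- The images in `Perm (Fin 5)` of the generators under the monodromy of the 5-sheeted cover, as
tables of values together with the tables of the inverse permutations. -/
def monodromy : Gen → Perm (Fin 5)
  | .u => ⟨![1, 2, 3, 4, 0], ![4, 0, 1, 2, 3], by decide, by decide⟩
  | .v => ⟨![4, 3, 1, 0, 2], ![3, 2, 4, 1, 0], by decide, by decide⟩
  | .w => ⟨![2, 4, 1, 0, 3], ![3, 2, 0, 4, 1], by decide, by decide⟩
  | .x => ⟨![2, 0, 4, 1, 3], ![1, 3, 0, 4, 2], by decide, by decide⟩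
  | .y => ⟨![3, 0, 4, 2, 1], ![1, 4, 3, 0, 2], by decide, by decide⟩
  | .z => ⟨![4, 3, 0, 2, 1], ![2, 4, 3, 1, 0], by decide, by decide⟩

/-- The wreath product `M ≀ Perm (Fin 5)` of an additive abelian group `M`. The permutation `s`
acts on functions by `(s • f) i = f (s⁻¹ i)`. -/
abbrev Wr (M : Type*) [AddCommGroup M] : Type _ :=
  (Fin 5 → Multiplicative M) ⋊[mulAutArrow] Perm (Fin 5)

section
variable {M : Type*} [AddCommGroup M]

theorem mul_left_apply (a b : Wr M) (i : Fin 5) :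
    ((a * b).left i).toAdd = (a.left i).toAdd + (b.left (a.right⁻¹ i)).toAdd := rfl

theorem inv_left_apply (a : Wr M) (i : Fin 5) :
    ((a⁻¹).left i).toAdd = - (a.left (a.right i)).toAdd := by
  change - (a.left ((a.right⁻¹)⁻¹ i)).toAdd = _
  rw [inv_inv]

/-- The elements of the wreath product with base coordinates given by the table `c`, lying over the
permutations `monodromy`. -/
def wreathLift (c : Gen → Fin 5 → M) (g : Gen) : Wr M :=
  ⟨fun i => Multiplicative.ofAdd (c g i), monodromy g⟩

/-- The linear system saying that the table `c` respects the six relators of `wsRels`. In each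
equation the argument of a letter is the image of `i` under the inverse of the product of the
permutations preceding that letter in the relator, with the letter itself included when it occurs
inverted. -/
def FoxSystem (c : Gen → Fin 5 → M) : Prop :=
  (∀ i, c .u i + c .x (![4, 0, 1, 2, 3] i) - c .y (![4, 0, 2, 3, 1] i)
    - c .v (![2, 4, 1, 0, 3] i) + c .w (![2, 4, 1, 0, 3] i) = 0) ∧
  (∀ i, c .u i + c .y (![4, 0, 1, 2, 3] i) - c .z (![0, 3, 1, 2, 4] i)
    - c .w (![2, 0, 4, 1, 3] i) + c .x (![2, 0, 4, 1, 3] i) = 0) ∧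
  (∀ i, c .u i + c .z (![4, 0, 1, 2, 3] i) - c .v (![4, 1, 2, 0, 3] i)
    - c .x (![3, 0, 4, 2, 1] i) + c .y (![3, 0, 4, 2, 1] i) = 0) ∧
  (∀ i, c .u i + c .v (![4, 0, 1, 2, 3] i) - c .w (![2, 0, 1, 3, 4] i)
    - c .y (![4, 3, 0, 2, 1] i) + c .z (![4, 3, 0, 2, 1] i) = 0) ∧
  (∀ i, c .u i + c .w (![4, 0, 1, 2, 3] i) - c .x (![0, 1, 4, 2, 3] i)
    - c .z (![4, 3, 1, 0, 2] i) + c .v (![4, 3, 1, 0, 2] i) = 0) ∧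
  (∀ i, c .v i + c .x (![3, 2, 4, 1, 0] i) + c .z (![4, 0, 2, 3, 1] i)
    + c .w (![0, 2, 3, 1, 4] i) + c .y (![3, 0, 4, 2, 1] i) = 0)

/-- A relator evaluates in the wreath product to an element over the identity permutation, whose
five coordinates are the left-hand sides of the equations of `FoxSystem`. -/
theorem foxSystem_iff (c : Gen → Fin 5 → M) :
    FoxSystem c ↔ ∀ r ∈ wsRels, FreeGroup.lift (wreathLift c) r = 1 := by
  have hcongr : ∀ {g₁ g₂ g₃ g₄ g₅ : Gen} {i j₂ j₃ j₄ j₅ k₂ k₃ k₄ k₅ : Fin 5}, j₂ = k₂ → j₃ = k₃ →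
      j₄ = k₄ → j₅ = k₅ → (c g₁ i + c g₂ j₂ - c g₃ j₃ - c g₄ j₄ + c g₅ j₅ = 0 ↔
        c g₁ i + c g₂ k₂ - c g₃ k₃ - c g₄ k₄ + c g₅ k₅ = 0) := by
    rintro _ _ _ _ _ _ _ _ _ _ _ _ _ _ rfl rfl rfl rfl
    rfl
  have hcongr' : ∀ {g₁ g₂ g₃ g₄ g₅ : Gen} {i j₂ j₃ j₄ j₅ k₂ k₃ k₄ k₅ : Fin 5}, j₂ = k₂ → j₃ = k₃ →
      j₄ = k₄ → j₅ = k₅ → (c g₁ i + c g₂ j₂ + c g₃ j₃ + c g₄ j₄ + c g₅ j₅ = 0 ↔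
        c g₁ i + c g₂ k₂ + c g₃ k₃ + c g₄ k₄ + c g₅ k₅ = 0) := by
    rintro _ _ _ _ _ _ _ _ _ _ _ _ _ _ rfl rfl rfl rfl
    rfl
  have key : ∀ a : Wr M, a.right = 1 → (a = 1 ↔ ∀ i, (a.left i).toAdd = 0) := by
    intro a ha
    rw [SemidirectProduct.ext_iff, funext_iff]
    simp only [ha, SemidirectProduct.one_right, and_true]
    rfl
  simp only [wsRels, Set.mem_insert_iff, Set.mem_singleton_iff, forall_eq_or_imp, forall_eq,
    map_mul, map_inv, FreeGroup.lift_apply_of]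
  rw [key _ (by simp only [SemidirectProduct.mul_right, SemidirectProduct.inv_right,
      wreathLift]; decide),
    key _ (by simp only [SemidirectProduct.mul_right, SemidirectProduct.inv_right,
        wreathLift]; decide),
    key _ (by simp only [SemidirectProduct.mul_right, SemidirectProduct.inv_right,
        wreathLift]; decide),
    key _ (by simp only [SemidirectProduct.mul_right, SemidirectProduct.inv_right,
        wreathLift]; decide),
    key _ (by simp only [SemidirectProduct.mul_right, SemidirectProduct.inv_right,
        wreathLift]; decide),
    key _ (by simp only [SemidirectProduct.mul_right, wreathLift]; decide)]
  simp only [mul_left_apply, inv_left_apply, wreathLift, SemidirectProduct.mul_right,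
    SemidirectProduct.inv_right, toAdd_ofAdd, mul_inv_rev, inv_inv, Perm.mul_apply,
    ← sub_eq_add_neg]
  refine and_congr ?_ (and_congr ?_ (and_congr ?_ (and_congr ?_ (and_congr ?_ ?_)))) <;>
    refine forall_congr' fun i => ?_
  iterate 5
    exact hcongr (by revert i; decide) (by revert i; decide) (by revert i; decide)
      (by revert i; decide)
  exact hcongr' (by revert i; decide) (by revert i; decide) (by revert i; decide)
    (by revert i; decide)

/-- The general solution of `FoxSystem` among the tables vanishing at `(u, 1), …, (u, 4)`; the
parameters `p` and `q` have to be killed by 3. -/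
def foxTable (a b c d p q : M) : Gen → Fin 5 → M
  | .u => ![0, 0, 0, 0, 0]
  | .v => ![2 • a - b - 3 • c + 3 • d + p - q, a,
      -2 • a + b + c - 4 • d - p, -a + b + 2 • c - d + q, -b + 2 • d]
  | .w => ![4 • a - 2 • b - 3 • c + 7 • d - p + q, -a - 3 • d,
      -3 • a + b + 2 • c - 4 • d + p - q, b, c]
  | .x => ![3 • a - 2 • b - 2 • c + 7 • d, a - c + d + p,
      -2 • a + b - 3 • d - p + q, -3 • a + 2 • b + 3 • c - 6 • d, a - b + d - q]
  | .y => ![3 • a - b - c + 5 • d, -2 • a + 2 • b + c - 5 • d - q,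
      -a - c - 2 • d + p, d, -b + c + d - p + q]
  | .z => ![a - b - c + 2 • d, -a + b - 4 • d + q,
      a - 2 • c + 2 • d - p, 2 • a - b + 5 • d + p - q, -3 • a + b + 3 • c - 5 • d]

theorem foxTable_system {a b c d p q : M} (hp : 3 • p = 0) (hq : 3 • q = 0) :
    FoxSystem (foxTable a b c d p q) := by
  refine ⟨fun i => ?_, fun i => ?_, fun i => ?_, fun i => ?_, fun i => ?_, fun i => ?_⟩ <;>
    fin_cases i <;> simp [foxTable] <;> grind

/-- Every solution vanishing at `(u, 1), …, (u, 4)` is a `foxTable`. The linear combinations are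
those of an integral elimination of the 30 equations; its pivots leave the four listed entries and
the torsion elements `p`, `q` as parameters. -/
theorem eq_foxTable {f : Gen → Fin 5 → M} (hf : FoxSystem f) (h1 : f .u 1 = 0) (h2 : f .u 2 = 0)
    (h3 : f .u 3 = 0) (h4 : f .u 4 = 0) : ∃ p q : M, 3 • p = 0 ∧ 3 • q = 0 ∧
      f = foxTable (f .v 1) (f .w 3) (f .w 4) (f .y 3) p q := by
  obtain ⟨r1, r2, r3, r4, r5, r6⟩ := hf
  simp [Fin.forall_fin_succ, h1, h2, h3, h4] at r1 r2 r3 r4 r5 r6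
  obtain ⟨r10, r11, r12, r13, r14⟩ := r1
  obtain ⟨r20, r21, r22, r23, r24⟩ := r2
  obtain ⟨r30, r31, r32, r33, r34⟩ := r3
  obtain ⟨r40, r41, r42, r43, r44⟩ := r4
  obtain ⟨r50, r51, r52, r53, r54⟩ := r5
  obtain ⟨r60, r61, r62, r63, r64⟩ := r6
  set a := f .v 1 with ha
  set b := f .w 3 with hb
  set c := f .w 4 with hc
  set d := f .y 3 with hd
  obtain ⟨p, hy2⟩ : ∃ p, f .y 2 = -a - c - 2 • d + p := ⟨f .y 2 + a + c + 2 • d, by module⟩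
  obtain ⟨q, hv3⟩ : ∃ q, f .v 3 = -a + b + 2 • c - d + q :=
    ⟨f .v 3 + a - b - 2 • c + d, by module⟩
  have hp : 3 • p = 0 := by
    linear_combination (norm := module) (-4 : ℤ) • r12 - 2 • r13 - r22 - 2 • r23 - 2 • r33
      - r34 - 4 • r41 - 2 • r44 - 2 • r51 - r52 + 3 • r63 - 3 • hy2
  have hq : 3 • q = 0 := by
    linear_combination (norm := module) (-2 : ℤ) • r11 - r14 + r22 + 2 • r24 + r30 - r31 + r42
      + 2 • r44 - r50 + r52 - 3 • hv3
  have hz3 : f .z 3 = 2 • a - b + 5 • d + p - q := by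
    linear_combination (norm := module) -r12 + r63 - hv3 - 2 • hy2 - hp
  have hx4 : f .x 4 = a - b + d - q := by
    linear_combination (norm := module) r22 + r44 - hv3
  have hx2 : f .x 2 = -2 • a + b - 3 • d - p + q := by
    linear_combination (norm := module) r12 + r13 + r41 - r63 + hv3 + 2 • hy2 + hp
  have hw1 : f .w 1 = -a - 3 • d := by
    linear_combination (norm := module) -r12 - r13 - r23 - r33 - 2 • r41 - r51 + r63
  have hx1 : f .x 1 = a - c + d + p := by
    linear_combination (norm := module) r12 + hy2 - hw1
  have hz1 : f .z 1 = -a + b - 4 • d + q := by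
    linear_combination (norm := module) -r52 + hw1 - hx4
  have hy1 : f .y 1 = -2 • a + 2 • b + c - 5 • d - q := by
    linear_combination (norm := module) r22 + hz1 - hx4 + hq
  have hx3 : f .x 3 = -3 • a + 2 • b + 3 • c - 6 • d := by
    linear_combination (norm := module) r14 + hy1 + hv3
  have hz4 : f .z 4 = -3 • a + b + 3 • c - 5 • d := by
    linear_combination (norm := module) -r24 + hx3
  have hz2 : f .z 2 = a - 2 • c + 2 • d - p := by
    linear_combination (norm := module) -r23 + hy2 - hw1 + hx1 + hp
  have hv2 : f .v 2 = -2 • a + b + c - 4 • d - p := by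
    linear_combination (norm := module) r43 + hy2 - hz2 + hp
  have hy4 : f .y 4 = -b + c + d - p + q := by
    linear_combination (norm := module) r32 - hz1 + hv2 + hx4 - hq
  have hv0 : f .v 0 = 2 • a - b - 3 • c + 3 • d + p - q := by
    linear_combination (norm := module) -r33 + hz2 - hx2 + hy2
  have hw0 : f .w 0 = 4 • a - 2 • b - 3 • c + 7 • d - p + q := by
    linear_combination (norm := module) r13 - hx2 + hv0 + hp - hq
  have hz0 : f .z 0 = a - b - c + 2 • d := by
    linear_combination (norm := module) r11 + r14 - r20 + r22 + r23 - r24 + r32 + r41 - r42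
      + r43 + r50 + r51 - r53
  have hy0 : f .y 0 = 3 • a - b - c + 5 • d := by
    linear_combination (norm := module) -r42 - hw1 + hz0
  have hx0 : f .x 0 = 3 • a - 2 • b - 2 • c + 7 • d := by
    linear_combination (norm := module) -r31 + hz0 + hy0
  have hv4 : f .v 4 = -b + 2 • d := by
    linear_combination (norm := module) -r11 + hx0 - hy0
  have hu0 : f .u 0 = 0 := by
    linear_combination (norm := module) r30 - hz4 + hv4 + hx3
  have hw2 : f .w 2 = -3 • a + b + 2 • c - 4 • d + p - q := by
    linear_combination (norm := module) r53 + hx2 + hz0 - hv0 - hp + hq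
  refine ⟨p, q, hp, hq, ?_⟩
  funext g i
  cases g <;> fin_cases i <;> assumption

end

/-! ### The index 5 subgroup -/

theorem monodromy_rel : ∀ r ∈ wsRels, FreeGroup.lift monodromy r = 1 := by
  simp only [wsRels, Set.mem_insert_iff, Set.mem_singleton_iff, forall_eq_or_imp, forall_eq,
    map_mul, map_inv, FreeGroup.lift_apply_of]
  decide

/-- The monodromy action of `G` on the five sheets. -/
def sigma : G →* Perm (Fin 5) := PresentedGroup.toGroup monodromy_rel

@[simp] theorem sigma_of (g : Gen) : sigma (PresentedGroup.of g) = monodromy g :=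
  PresentedGroup.toGroup.of _

/-- The fundamental group of the 5-sheeted cover: the stabilizer of the sheet `0`. -/
def hempelSubgroup : Subgroup G := (MulAction.stabilizer (Perm (Fin 5)) (0 : Fin 5)).comap sigma

theorem mem_hempelSubgroup {g : G} : g ∈ hempelSubgroup ↔ sigma g 0 = 0 := Iff.rfl

/-- The coset representatives `u ^ i`, which carry the sheet `0` to the sheet `i`. -/
def cosetRep (i : Fin 5) : G := PresentedGroup.of Gen.u ^ (i : ℕ)

theorem sigma_cosetRep (i : Fin 5) : sigma (cosetRep i) 0 = i := by
  rw [cosetRep, map_pow, sigma_of]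
  revert i
  decide

theorem index_hempelSubgroup : hempelSubgroup.index = 5 := by
  let _ : MulAction G (Fin 5) := MulAction.compHom (Fin 5) sigma
  have horb : MulAction.orbit G (0 : Fin 5) = Set.univ :=
    Set.eq_univ_of_forall fun i => ⟨cosetRep i, sigma_cosetRep i⟩
  have h : hempelSubgroup = MulAction.stabilizer G (0 : Fin 5) := rfl
  rw [h, MulAction.index_stabilizer, horb, Set.ncard_univ, Nat.card_fin]

theorem schreier_mem (g : G) (i : Fin 5) :
    (cosetRep i)⁻¹ * g * cosetRep ((sigma g)⁻¹ i) ∈ hempelSubgroup := by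
  rw [mem_hempelSubgroup, map_mul, map_mul, map_inv, Perm.mul_apply, Perm.mul_apply, sigma_cosetRep,
    Perm.inv_eq_iff_eq, sigma_cosetRep]
  exact (sigma g).apply_symm_apply i

/-! ### The wreath-valued homomorphism of Schreier elements -/

/-- The abelianization of `hempelSubgroup`, written additively. -/
abbrev KAb : Type := Additive (Abelianization hempelSubgroup)

/-- The homomorphism to the wreath product induced from `hempelSubgroup → KAb`: the coordinates of
the image of `g` are the classes of the Schreier elements of `g` for the transversal `cosetRep`. -/
def schreierHom : G →* Wr KAb where
  toFun g := ⟨fun i => Multiplicative.ofAdd (Additive.ofMul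
    (Abelianization.of ⟨_, schreier_mem g i⟩)), sigma g⟩
  map_one' := by
    refine SemidirectProduct.ext (funext fun i => ?_) (map_one sigma)
    change Abelianization.of _ = 1
    convert map_one Abelianization.of
    simp
  map_mul' g h := by
    refine SemidirectProduct.ext (funext fun i => ?_) (map_mul sigma g h)
    change Abelianization.of _ = Abelianization.of _ * Abelianization.of _
    rw [← map_mul]
    congr 1
    refine Subtype.ext ?_
    change (cosetRep i)⁻¹ * (g * h) * cosetRep ((sigma (g * h))⁻¹ i) =
      ((cosetRep i)⁻¹ * g * cosetRep ((sigma g)⁻¹ i)) *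
        ((cosetRep ((sigma g)⁻¹ i))⁻¹ * h * cosetRep ((sigma h)⁻¹ ((sigma g)⁻¹ i)))
    rw [map_mul, mul_inv_rev, Perm.mul_apply]
    group

theorem schreierHom_left_zero (k : hempelSubgroup) :
    (schreierHom k).left 0 = Multiplicative.ofAdd (Additive.ofMul (Abelianization.of k)) := by
  change Abelianization.of _ = Abelianization.of _
  congr 1
  refine Subtype.ext ?_
  have hk : (sigma k)⁻¹ 0 = 0 := Perm.inv_eq_iff_eq.2 k.2.symm
  simp [hk, cosetRep]

/-- The base coordinates of `schreierHom` on the generators. -/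
def schreierTable (g : Gen) (i : Fin 5) : KAb := ((schreierHom (PresentedGroup.of g)).left i).toAdd

theorem schreierTable_system : FoxSystem schreierTable := by
  rw [foxSystem_iff]
  have h : FreeGroup.lift (wreathLift schreierTable)
      = schreierHom.comp (PresentedGroup.mk wsRels) := by
    ext g : 1
    rw [FreeGroup.lift_apply_of]
    exact SemidirectProduct.ext rfl (sigma_of g).symm
  intro r hr
  rw [h, MonoidHom.comp_apply,
      (PresentedGroup.mk_eq_one_iff).2 (Subgroup.subset_normalClosure hr), map_one]

/-- For `i ≠ 0` the Schreier element of `u` at `i` is `(u ^ i)⁻¹ * u * u ^ (i - 1) = 1`. -/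
theorem schreierTable_u : ∀ i : Fin 5, i ≠ 0 → schreierTable .u i = 0 := by
  intro i hi
  change Abelianization.of _ = 1
  convert map_one Abelianization.of
  obtain ⟨j, rfl⟩ := Fin.exists_succ_eq.2 hi
  have hj : (monodromy .u)⁻¹ j.succ = j.castSucc := by
    revert j; decide
  rw [sigma_of, hj]
  simp only [cosetRep, Fin.val_succ, Fin.val_castSucc, pow_succ, mul_assoc, inv_mul_cancel,
      ← pow_succ', Subgroup.coe_one]

/-! ### The wreath-valued homomorphism of the universal table -/

/-- The expected abelianization `ℤ⁴ × (ℤ/3)²`. -/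
abbrev Target : Type := (Fin 4 → ℤ) × (Fin 2 → ZMod 3)

/-- The standard generators of the free part of `Target`. -/
def freeGen (i : Fin 4) : Target := (Pi.single i 1, 0)

/-- The standard generators of the torsion part of `Target`. -/
def torGen (i : Fin 2) : Target := (0, Pi.single i 1)

/-- The universal property of `ℤ⁴ × (ℤ/3)²`. -/
theorem exists_hom {M : Type*} [AddCommGroup M] (m : Fin 4 → M) (n : Fin 2 → M)
    (hn : ∀ i, 3 • n i = 0) :
    ∃ e : Target →+ M, (∀ i, e (freeGen i) = m i) ∧ ∀ i, e (torGen i) = n i := by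
  have hn' : ∀ i, zmultiplesHom M (n i) (3 : ℕ) = 0 := fun i => by
    simpa using (ofNat_zsmul (n i) 3).trans (hn i)
  let F : Fin 2 → ZMod 3 →+ M := fun i =>
    ZMod.lift 3 ⟨zmultiplesHom M (n i), hn' i⟩
  have hF : ∀ i, F i 1 = n i := fun i => by
    simpa using ZMod.lift_coe 3 ⟨zmultiplesHom M (n i), hn' i⟩ 1
  refine ⟨(Fintype.linearCombination ℤ m).toAddMonoidHom.coprod
    (∑ i, (F i).comp (Pi.evalAddMonoidHom _ i)), fun i => ?_, fun i => ?_⟩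
  · simp [freeGen]
  · simp only [torGen, AddMonoidHom.coprod_apply, map_zero, zero_add, AddMonoidHom.finsetSum_apply,
      AddMonoidHom.comp_apply, Pi.evalAddMonoidHom_apply]
    rw [Finset.sum_eq_single i]
    · simp [hF]
    · intro j _ hj; simp [hj]
    · simp

theorem target_hom_ext {N : Type*} [AddCommGroup N] {e e' : Target →+ N}
    (h : ∀ i, e (freeGen i) = e' (freeGen i)) (h' : ∀ i, e (torGen i) = e' (torGen i)) : e = e' := by
  have h₁ : e.comp (AddMonoidHom.inl _ _) = e'.comp (AddMonoidHom.inl _ _) := by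
    ext i; exact h i
  have h₂ : e.comp (AddMonoidHom.inr _ _) = e'.comp (AddMonoidHom.inr _ _) := by
    ext i n
    obtain ⟨k, rfl⟩ := ZMod.natCast_zmod_surjective n
    rw [← nsmul_one, map_nsmul, map_nsmul]
    exact congrArg (k • ·) (h' i)
  rw [← AddMonoidHom.coprod_unique e, h₁, h₂, AddMonoidHom.coprod_unique]

/-- The table with the standard generators of `Target` as its parameters. -/
def univTable : Gen → Fin 5 → Target :=
  foxTable (freeGen 0) (freeGen 1) (freeGen 2) (freeGen 3) (torGen 0) (torGen 1)

theorem three_torGen (i : Fin 2) : 3 • torGen i = 0 := by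
  revert i; decide

/-- The homomorphism from `G` to the wreath product defined by `univTable`. -/
def univHom : G →* Wr Target :=
  PresentedGroup.toGroup ((foxSystem_iff univTable).1
    (foxTable_system (three_torGen 0) (three_torGen 1)))

theorem univHom_of (g : Gen) : univHom (PresentedGroup.of g) = wreathLift univTable g :=
  PresentedGroup.toGroup.of _

theorem univHom_right (g : G) : (univHom g).right = sigma g := by
  have : SemidirectProduct.rightHom.comp univHom = sigma :=
    PresentedGroup.ext fun g => by
      rw [MonoidHom.comp_apply, univHom_of, sigma_of]; rfl
  exact DFunLike.congr_fun this g

/-- The row of `u` in `univTable` is zero, so powers of `u` have trivial base coordinates. -/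
theorem univHom_cosetRep (i : Fin 5) :
    univHom (cosetRep i) = SemidirectProduct.inr (sigma (cosetRep i)) := by
  rw [cosetRep, map_pow, map_pow, map_pow, univHom_of, sigma_of]
  congr 1
  refine SemidirectProduct.ext (funext fun i => ?_) rfl
  revert i
  decide

/-- The coordinate of `univHom` at the sheet `0`, which is multiplicative on the stabilizer
of `0`. -/
def toTarget : hempelSubgroup →* Multiplicative Target where
  toFun k := (univHom k).left 0
  map_one' := by simp
  map_mul' k l := by
    have hk : (sigma k)⁻¹ 0 = 0 := Perm.inv_eq_iff_eq.2 k.2.symm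
    have := mul_left_apply (univHom k) (univHom l) 0
    rw [univHom_right, hk] at this
    rw [Subgroup.coe_mul, map_mul]
    exact this

/-- The factorization of `toTarget` through the abelianization. -/
def toTargetAb : KAb →+ Target := MonoidHom.toAdditiveLeft (Abelianization.lift toTarget)

theorem toTargetAb_schreierTable (g : Gen) (i : Fin 5) :
    toTargetAb (schreierTable g i) = univTable g i := by
  change ((univHom ((cosetRep i)⁻¹ * PresentedGroup.of g * cosetRep _)).left 0).toAdd = _
  rw [map_mul, map_mul, map_inv, univHom_cosetRep, univHom_cosetRep, mul_left_apply, mul_left_apply,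
    inv_left_apply, univHom_of]
  simp [wreathLift, sigma_cosetRep]

/-! ### The comparison -/

theorem map_foxTable {M N : Type*} [AddCommGroup M] [AddCommGroup N] (e : M →+ N)
    (a b c d p q : M) (g : Gen) (i : Fin 5) :
    e (foxTable a b c d p q g i) = foxTable (e a) (e b) (e c) (e d) (e p) (e q) g i := by
  cases g <;> fin_cases i <;> simp [foxTable]

/-- The homomorphism of wreath products that applies `e` to each base coordinate. -/
def wreathMap {M N : Type*} [AddCommGroup M] [AddCommGroup N] (e : M →+ N) : Wr M →* Wr N :=
  SemidirectProduct.map ((AddMonoidHom.toMultiplicative e).compLeft (Fin 5)) (MonoidHom.id _)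
    fun _ => rfl

theorem exists_equiv : Nonempty (KAb ≃+ Target) := by
  obtain ⟨p, q, hp, hq, htab⟩ := eq_foxTable schreierTable_system (schreierTable_u 1 (by decide))
    (schreierTable_u 2 (by decide)) (schreierTable_u 3 (by decide)) (schreierTable_u 4 (by decide))
  obtain ⟨e, hfree, htor⟩ := exists_hom ![schreierTable .v 1, schreierTable .w 3,
    schreierTable .w 4, schreierTable .y 3] ![p, q] (by simp [Fin.forall_fin_two, hp, hq])
  have he : ∀ g i, e (univTable g i) = schreierTable g i := by
    intro g i
    rw [univTable, map_foxTable, hfree, hfree, hfree, hfree, htor, htor]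
    exact (congrFun (congrFun htab g) i).symm
  have hcomp : (wreathMap e).comp univHom = schreierHom :=
    PresentedGroup.ext fun g => by
      rw [MonoidHom.comp_apply, univHom_of]
      exact SemidirectProduct.ext (funext fun i => he g i) (sigma_of g).symm
  have hleft : e.comp toTargetAb = AddMonoidHom.id KAb := by
    ext k
    have := congrArg (fun a : Wr KAb => (a.left 0).toAdd) (DFunLike.congr_fun hcomp (k : G))
    exact this.trans (congrArg Multiplicative.toAdd (schreierHom_left_zero k))
  have hright : toTargetAb.comp e = AddMonoidHom.id Target := by
    have ht := fun g i => (congrArg toTargetAb (he g i)).trans (toTargetAb_schreierTable g i)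
    have hfree' : ∀ i, freeGen i = ![univTable .v 1, univTable .w 3, univTable .w 4,
        univTable .y 3] i := by decide
    have htor' : ∀ i, torGen i = ![univTable .y 2 + univTable .v 1 + univTable .w 4
          + 2 • univTable .y 3,
        univTable .v 3 + univTable .v 1 - univTable .w 3 - 2 • univTable .w 4
          + univTable .y 3] i := by decide
    refine target_hom_ext (fun i => ?_) fun i => ?_
    · rw [AddMonoidHom.comp_apply, AddMonoidHom.id_apply, hfree']
      fin_cases i <;> simp [ht]
    · rw [AddMonoidHom.comp_apply, AddMonoidHom.id_apply, htor']
      fin_cases i <;> simp [ht, two_nsmul, -nsmul_eq_mul]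
  exact ⟨AddMonoidHom.toAddEquiv toTargetAb e hleft hright⟩

end HempelCover

/-- `G` has a subgroup of index 5 whose abelianization is `ℤ⁴ × (ℤ/3ℤ)²`
(Hempel's 5-sheeted cover with positive first Betti number). -/
theorem ws_hempel_cover :
    ∃ K : Subgroup G, K.index = 5 ∧
      Nonempty (Abelianization K ≃* Multiplicative ((Fin 4 → ℤ) × (Fin 2 → ZMod 3))) := by
  obtain ⟨e⟩ := exists_equiv
  exact ⟨hempelSubgroup, index_hempelSubgroup, ⟨AddEquiv.toMultiplicativeRight e⟩⟩
end

section
/- The set of subgroups of G of index 6, considered up to conjugacy in G, has exactly 61 elements. (Equivalently, the Weber–Seifert dodecahedral space has exactly 61 connected covers of degree 6.) -/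
namespace WS

open Equiv

/-! ### Coded permutations of six points -/

/-- Six entries of type `α`. A structure rather than a function, so that kernel evaluation shares
the entries. -/
structure Six (α : Type) where
  a0 : α
  a1 : α
  a2 : α
  a3 : α
  a4 : α
  a5 : α

namespace Six

/-- The entry with index `i`; indices beyond `5` give the last entry. -/
def get {α : Type} (v : Six α) (i : ℕ) : α :=
  bif i.ble 2 then bif i.beq 0 then v.a0 else bif i.beq 1 then v.a1 else v.a2
  else bif i.beq 3 then v.a3 else bif i.beq 4 then v.a4 else v.a5

/-- The entries `f 0, …, f 5`. -/
def ofFn {α : Type} (f : ℕ → α) : Six α := ⟨f 0, f 1, f 2, f 3, f 4, f 5⟩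

theorem get_ofFn {α : Type} (f : ℕ → α) (i : Fin 6) : (ofFn f).get i = f i := by
  fin_cases i <;> rfl

end Six

open Six

/-- A map from six points to natural numbers, meant to code a permutation of `Fin 6` by its list of
values. -/
abbrev Code := Six ℕ

/-- `c` is the list of values of `π`. -/
def Rep (c : Code) (π : Perm (Fin 6)) : Prop := ∀ i : Fin 6, c.get i = π i

/-- Composition of codes, `c` after `d`. -/
def mulc (c d : Code) : Code := ofFn fun i => c.get (d.get i)

/-- Equality of codes. -/
def beqc (c d : Code) : Bool :=
  (c.a0.beq d.a0 && c.a1.beq d.a1) && (c.a2.beq d.a2 && c.a3.beq d.a3) &&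
    (c.a4.beq d.a4 && c.a5.beq d.a5)

/-- The code of the identity. -/
def onec : Code := ⟨0, 1, 2, 3, 4, 5⟩

/-- The code of the transposition of `j` and `k`. -/
def swapc (j k : ℕ) : Code := ofFn fun i => bif i.beq j then k else bif i.beq k then j else i

/-- The permutations of six points: those fixing every point `> k` are the products of those fixing
every point `≥ k` with the transpositions `(j k)`, `j ≤ k`. -/
def s6 : List Code :=
  [1, 2, 3, 4, 5].foldl
    (fun l k => (List.range (k + 1)).flatMap fun j => l.map fun c => mulc c (swapc j k)) [onec]

theorem Rep.get_lt {c : Code} {π : Perm (Fin 6)} (h : Rep c π) (i : Fin 6) : c.get i < 6 := by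
  rw [h i]; exact (π i).isLt

theorem Rep.mul {c d : Code} {π ρ : Perm (Fin 6)} (hc : Rep c π) (hd : Rep d ρ) :
    Rep (mulc c d) (π * ρ) := by
  intro i
  rw [mulc, get_ofFn, hd i, hc]; rfl

theorem Rep.ext {c d : Code} {π ρ : Perm (Fin 6)} (hc : Rep c π) (hd : Rep d ρ)
    (h : ∀ i : Fin 6, c.get i = d.get i) : π = ρ := by
  ext i
  rw [← hc i, ← hd i, h i]

theorem eq_of_beqc {c d : Code} (h : beqc c d = true) : c = d := by
  cases c; cases d
  simp only [beqc, Bool.and_eq_true, Nat.beq_eq] at h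
  obtain ⟨⟨⟨h0, h1⟩, h2, h3⟩, h4, h5⟩ := h
  simp_all

theorem rep_onec : Rep onec 1 := by
  intro i
  fin_cases i <;> rfl

theorem rep_swapc : ∀ j k : Fin 6, Rep (swapc j k) (swap j k) := by
  unfold Rep
  decide +kernel

/-- The products of the members of `l` with one even permutation carrying `j` to `k` for each `j ≤ k`:
the identity if `j = k`, and otherwise `(j m) * (j k)` with `m = 0`, or `m = 1` if `j = 0`. -/
def altStep (l : List Code) (k : ℕ) : List Code :=
  (List.range (k + 1)).flatMap fun j => l.map fun c => mulc c
    (bif j.beq k then onec else mulc (swapc j (bif j.beq 0 then 1 else 0)) (swapc j k))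

/-- If `l` lists the even permutations fixing every point `≥ k`, then `altStep l k` lists those
fixing every point `> k`: multiply by an even permutation carrying `π⁻¹ k` to `k`. -/
theorem altStep_complete {l : List Code} (K : Fin 6) (hK : 2 ≤ K.val)
    (hl : ∀ π : Perm (Fin 6), Perm.sign π = 1 → (∀ i : Fin 6, K ≤ i → π i = i) →
      ∃ c ∈ l, Rep c π) (π : Perm (Fin 6)) (hs : Perm.sign π = 1)
    (hπ : ∀ i : Fin 6, K < i → π i = i) : ∃ c ∈ altStep l K, Rep c π := by
  obtain ⟨j, hj⟩ := π.surjective K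
  have hjK : j ≤ K := by
    by_contra! h
    exact h.ne' ((hπ j h).symm.trans hj)
  have hmem : j.val ∈ List.range (K.val + 1) :=
    List.mem_range.2 (Nat.lt_succ_of_le hjK)
  by_cases e : j = K
  · obtain ⟨c, hc, hr⟩ := hl π hs fun i hi => by
      rcases hi.eq_or_lt with rfl | h
      · rwa [e] at hj
      · exact hπ i h
    refine ⟨mulc c onec, List.mem_flatMap.2 ⟨j, hmem, List.mem_map.2 ⟨c, hc, ?_⟩⟩, ?_⟩
    · rw [e, show K.val.beq K.val = true from Nat.beq_refl _, cond_true]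
    · simpa using hr.mul rep_onec
  · obtain ⟨j', hj', hne, hlt⟩ : ∃ j' : Fin 6, j'.val = (bif j.val.beq 0 then 1 else 0) ∧
        j' ≠ j ∧ j' < K := by
      have h6 := K.isLt
      cases h : j.val.beq 0 with
      | true =>
        rw [Nat.beq_eq] at h
        exact ⟨1, rfl, by rw [Ne, Fin.ext_iff, h]; decide, by rw [Fin.lt_def]; exact hK⟩
      | false =>
        have h0 : j.val ≠ 0 := fun h0 => by rw [h0] at h; exact absurd h (by decide)
        exact ⟨0, rfl, by rw [Ne, Fin.ext_iff]; exact h0.symm,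
          by rw [Fin.lt_def]; exact (by omega : 0 < K.val)⟩
    have hjb : j.val.beq K.val = false := by
      rw [← Bool.not_eq_true, Nat.beq_eq]
      exact fun h => e (Fin.ext h)
    obtain ⟨c, hc, hr⟩ := hl (π * (swap j j' * swap j K)⁻¹)
      (by simp [hs, Perm.sign_swap hne.symm, Perm.sign_swap e]) fun i hi => by
        rw [mul_inv_rev, swap_inv, swap_inv, Perm.mul_apply, Perm.mul_apply]
        rw [swap_apply_of_ne_of_ne (a := j) (b := j') (x := i)
          (((hjK.lt_of_ne e).trans_le hi).ne') ((hlt.trans_le hi).ne')]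
        rcases hi.eq_or_lt with rfl | h
        · rw [swap_apply_right, hj]
        · rw [swap_apply_of_ne_of_ne (hjK.trans_lt h).ne' h.ne', hπ i h]
    refine ⟨mulc c (mulc (swapc j j') (swapc j K)),
      List.mem_flatMap.2 ⟨j, hmem, List.mem_map.2 ⟨c, hc, ?_⟩⟩, ?_⟩
    · rw [hjb, cond_false, hj']
    · simpa [mul_assoc] using hr.mul ((rep_swapc j j').mul (rep_swapc j K))

/-- The alternating group on six points. -/
def a6 : List Code := altStep (altStep (altStep (altStep [onec] 2) 3) 4) 5

theorem a6_length : a6.length = 360 := by decide +kernel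

theorem a6_complete (π : Perm (Fin 6)) (hs : Perm.sign π = 1) : ∃ c ∈ a6, Rep c π := by
  refine altStep_complete 5 (by decide) (fun π hs h => ?_) π hs fun i hi => by omega
  refine altStep_complete 4 (by decide) (fun π hs h => ?_) π hs fun i hi => h i (by omega)
  refine altStep_complete 3 (by decide) (fun π hs h => ?_) π hs fun i hi => h i (by omega)
  refine altStep_complete 2 (by decide) (fun π hs h => ?_) π hs fun i hi => h i (by omega)
  refine ⟨onec, List.mem_singleton_self _, ?_⟩
  have h2 : π 2 = 2 := h 2 le_rfl
  have h3 : π 3 = 3 := h 3 (by decide)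
  have h4 : π 4 = 4 := h 4 (by decide)
  have h5 : π 5 = 5 := h 5 (by decide)
  have hlt : ∀ i : Fin 6, i < 2 → π i = 0 ∨ π i = 1 := by
    intro i hi
    have key : ∀ k : Fin 6, 2 ≤ k → π i ≠ k := fun k hk e =>
      absurd (π.injective (e.trans (h k hk).symm)) (hi.trans_le hk).ne
    have := key (π i)
    by_contra! hc
    refine this ?_ rfl
    have := hc.1
    have := hc.2
    omega
  rcases hlt 0 (by decide) with h0 | h0
  · have h1 : π 1 = 1 := (hlt 1 (by decide)).resolve_left fun h1 =>
      absurd (π.injective (h0.trans h1.symm)) (by decide)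
    have e : π = 1 := by
      ext i
      fin_cases i <;> simp [h0, h1, h2, h3, h4, h5]
    rw [e]
    exact rep_onec
  · have h1 : π 1 = 0 := (hlt 1 (by decide)).resolve_right fun h1 =>
      absurd (π.injective (h0.trans h1.symm)) (by decide)
    have e : π = swap 0 1 := by
      ext i
      fin_cases i <;> simp [h0, h1, h2, h3, h4, h5] <;> decide
    rw [e, Perm.sign_swap (by decide)] at hs
    exact absurd hs (by decide)

theorem exists_a6 {π : Perm (Fin 6)} (h : Perm.sign π = 1) :
    ∃ (n : ℕ) (hn : n < a6.length), Rep a6[n] π := by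
  obtain ⟨c, hc, hr⟩ := a6_complete π h
  obtain ⟨n, hn, rfl⟩ := List.getElem_of_mem hc
  exact ⟨n, hn, hr⟩

/-! ### Bit-parallel evaluation -/

/-- Bit `n` records the value of `f` at the `n`-th member of the list. -/
def maskOf (f : Code → Bool) : List Code → ℕ
  | [] => 0
  | c :: l => bif f c then Nat.add (Nat.mul 2 (maskOf f l)) 1 else Nat.mul 2 (maskOf f l)

theorem testBit_maskOf (f : Code → Bool) (l : List Code) (n : ℕ) (hn : n < l.length) :
    (maskOf f l).testBit n = f l[n] := by
  induction l generalizing n with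
  | nil => simp at hn
  | cons c l ih =>
    have e : maskOf f (c :: l) = Nat.bit (f c) (maskOf f l) := by
      cases h : f c <;> simp [maskOf, h, Nat.bit]
    rw [e]
    cases n with
    | zero => simp
    | succ n =>
      rw [Nat.testBit_bit_succ]
      simpa using ih n (by simpa using hn)

theorem maskOf_lt (f : Code → Bool) (l : List Code) : maskOf f l < 2 ^ l.length := by
  induction l with
  | nil => simp [maskOf]
  | cons c l ih =>
    have e : maskOf f (c :: l) = Nat.bit (f c) (maskOf f l) := by
      cases h : f c <;> simp [maskOf, h, Nat.bit]
    rw [e, List.length_cons, pow_succ, Nat.bit]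
    cases f c <;> simp <;> omega

/-- Concatenation of blocks of `N` bits, the head of the list in the lowest block. -/
def cat (N : ℕ) : List ℕ → ℕ
  | [] => 0
  | b :: l => Nat.lor (Nat.shiftLeft (cat N l) N) b

theorem testBit_cat {N : ℕ} (l : List ℕ) (hl : ∀ b ∈ l, b < 2 ^ N) (k r : ℕ) (hk : k < l.length)
    (hr : r < N) : (cat N l).testBit (N * k + r) = l[k].testBit r := by
  induction l generalizing k with
  | nil => simp at hk
  | cons b l ih =>
    have e : cat N (b :: l) = (cat N l <<< N) ||| b := rfl
    rw [e, Nat.testBit_or, Nat.testBit_shiftLeft]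
    cases k with
    | zero => simp [hr]
    | succ k =>
      have h0 : N ≤ N * (k + 1) + r := by rw [Nat.mul_succ]; omega
      have h1 : b.testBit (N * (k + 1) + r) = false :=
        Nat.testBit_lt_two_pow ((hl b (by simp)).trans_le (Nat.pow_le_pow_right (by simp) h0))
      have h2 : N * (k + 1) + r - N = N * k + r := by rw [Nat.mul_succ]; omega
      rw [h1, h2, ih (fun b hb => hl b (by simp [hb])) k (by simpa using hk)]
      simp [h0]

/-- Six bit sequences; reading bit `n` of each gives, for each `n`, a vector of six bits. -/
abbrev Vec := Six ℕ

/-- For each bit position `n`, a six by six matrix of bits. -/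
abbrev Mat := Six Vec

/-- At position `n` the vector `r` is the `i`-th unit vector. -/
def OneHot (r : Vec) (n : ℕ) (i : Fin 6) : Prop := ∀ k : Fin 6, (r.get k).testBit n = decide (i = k)

/-- At position `n` the matrix `M` is that of the permutation `π`: row `i` is the unit vector `π i`. -/
def Fam (M : Mat) (n : ℕ) (π : Perm (Fin 6)) : Prop := ∀ i : Fin 6, OneHot (M.get i) n (π i)

/-- Entrywise application of `f`. -/
def Six.map {α β : Type} (f : α → β) (v : Six α) : Six β :=
  ⟨f v.a0, f v.a1, f v.a2, f v.a3, f v.a4, f v.a5⟩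

theorem Six.get_map {α β : Type} (f : α → β) (v : Six α) (i : Fin 6) :
    (v.map f).get i = f (v.get i) := by
  fin_cases i <;> rfl

/-- The scalar product, at all bit positions at once. -/
def dot (r s : Vec) : ℕ :=
  Nat.lor (Nat.lor (Nat.lor (Nat.land r.a0 s.a0) (Nat.land r.a1 s.a1))
    (Nat.lor (Nat.land r.a2 s.a2) (Nat.land r.a3 s.a3)))
    (Nat.lor (Nat.land r.a4 s.a4) (Nat.land r.a5 s.a5))

theorem testBit_dot {r s : Vec} {n : ℕ} {i : Fin 6} (hr : OneHot r n i) :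
    (dot r s).testBit n = (s.get i).testBit n := by
  have e : dot r s = (((r.get 0 &&& s.get 0) ||| (r.get 1 &&& s.get 1)) |||
    ((r.get 2 &&& s.get 2) ||| (r.get 3 &&& s.get 3))) |||
    ((r.get 4 &&& s.get 4) ||| (r.get 5 &&& s.get 5)) := rfl
  have h0 := hr 0
  have h1 := hr 1
  have h2 := hr 2
  have h3 := hr 3
  have h4 := hr 4
  have h5 := hr 5
  simp only [Fin.coe_ofNat_eq_mod, Nat.reduceMod] at h0 h1 h2 h3 h4 h5
  rw [e]
  simp only [Nat.testBit_or, Nat.testBit_and, h0, h1, h2, h3, h4, h5]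
  fin_cases i <;> simp

/-- The scalar product of unit vectors compares their positions. Thus a single bitwise operation
tests an equality between points for every member of a family. -/
theorem testBit_dot_oneHot {r s : Vec} {n : ℕ} {i j : Fin 6} (hr : OneHot r n i)
    (hs : OneHot s n j) : (dot r s).testBit n = decide (j = i) := by
  rw [testBit_dot hr, hs]

/-- The transpose. -/
def tr (M : Mat) : Mat := ofFn fun j => M.map fun r => r.get j

theorem Fam.tr {M : Mat} {n : ℕ} {π : Perm (Fin 6)} (h : Fam M n π) : Fam (tr M) n π⁻¹ := by
  intro i k
  rw [WS.tr, get_ofFn, get_map, h k i, decide_eq_decide, Perm.inv_eq_iff_eq, eq_comm]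

/-- The image of the row vector `r` under the matrix with transpose `Mt`. -/
def appT (Mt : Mat) (r : Vec) : Vec := Mt.map (dot r)

theorem OneHot.appT {M : Mat} {r : Vec} {n : ℕ} {π : Perm (Fin 6)} {i : Fin 6}
    (hM : Fam M n π⁻¹) (hr : OneHot r n i) : OneHot (appT M r) n (π i) := by
  intro k
  rw [WS.appT, get_map, testBit_dot hr, hM k i, decide_eq_decide, Perm.inv_eq_iff_eq, eq_comm]

theorem OneHot.appT' {M : Mat} {r : Vec} {n : ℕ} {π : Perm (Fin 6)} {i : Fin 6}
    (hM : Fam M n π) (hr : OneHot r n i) : OneHot (WS.appT M r) n (π⁻¹ i) :=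
  OneHot.appT (by simpa using hM) hr

theorem Fam.comp {M L : Mat} {n : ℕ} {π ρ : Perm (Fin 6)} (hM : Fam M n π) (hL : Fam L n ρ) :
    Fam (L.map (appT M)) n (π⁻¹ * ρ) := by
  intro i
  rw [get_map]
  exact (hL i).appT' hM

/-- The entries of `v` rearranged by `c`. -/
def Six.perm {α : Type} (v : Six α) (c : Code) : Six α := ofFn fun k => v.get (c.get k)

theorem OneHot.perm {r : Vec} {n : ℕ} {i : Fin 6} {c : Code} {ρ : Perm (Fin 6)}
    (hr : OneHot r n i) (hc : Rep c ρ) : OneHot (r.perm c) n (ρ⁻¹ i) := by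
  intro k
  rw [Six.perm, get_ofFn, hc k, hr, decide_eq_decide, Perm.inv_eq_iff_eq]

theorem Fam.perm {M : Mat} {n : ℕ} {π ρ : Perm (Fin 6)} {c : Code}
    (hM : Fam M n π) (hc : Rep c ρ) : Fam (M.map fun r => r.perm c) n (ρ⁻¹ * π) := by
  intro i
  rw [get_map]
  exact (hM i).perm hc

theorem OneHot.congr {r : Vec} {n : ℕ} {i j : Fin 6} (h : OneHot r n i) (e : i = j) :
    OneHot r n j := e ▸ h

theorem Fam.congr {M : Mat} {n : ℕ} {π ρ : Perm (Fin 6)} (h : Fam M n π) (e : π = ρ) :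
    Fam M n ρ := e ▸ h

/-- The inverse of the code of a permutation. -/
def invc (c : Code) : Code := ofFn fun k =>
  bif c.a0.beq k then 0 else bif c.a1.beq k then 1 else bif c.a2.beq k then 2 else
  bif c.a3.beq k then 3 else bif c.a4.beq k then 4 else 5

theorem Rep.inv {c : Code} {π : Perm (Fin 6)} (h : Rep c π) : Rep (invc c) π⁻¹ := by
  intro i
  obtain ⟨k, rfl⟩ := π.surjective i
  rw [show π⁻¹ (π k) = k from π.symm_apply_apply k, invc, get_ofFn]
  have e : ∀ j : Fin 6, (c.get j).beq (π k) = decide (j = k) := by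
    intro j
    rw [h j, Bool.eq_iff_iff, Nat.beq_eq, decide_eq_true_iff, Fin.val_inj, π.injective.eq_iff]
  have e0 : c.a0.beq (π k) = _ := e 0
  have e1 : c.a1.beq (π k) = _ := e 1
  have e2 : c.a2.beq (π k) = _ := e 2
  have e3 : c.a3.beq (π k) = _ := e 3
  have e4 : c.a4.beq (π k) = _ := e 4
  rw [e0, e1, e2, e3, e4]
  fin_cases k <;> rfl

/-- Bit `n` is set when the `n`-th member of `a6` sends `i` to `j`. -/
def atom (i j : ℕ) : ℕ := maskOf (fun c => (c.get i).beq j) a6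

/-- The matrix family whose `n`-th member is the `n`-th member of `a6`. -/
def atoms : Mat := ofFn fun i => ofFn fun j => atom i j

theorem fam_atoms (n : ℕ) (hn : n < a6.length) (π : Perm (Fin 6)) (h : Rep a6[n] π) :
    Fam atoms n π := by
  intro i j
  rw [atoms, get_ofFn, get_ofFn, atom, testBit_maskOf _ _ _ hn, h i, Bool.eq_iff_iff, Nat.beq_eq,
    decide_eq_true_iff, Fin.val_inj]

/-- The matrix of `z` for all pairs `(x, z)` of even permutations: bit `360 * k + n` belongs to the
pair in which `x` is the `k`-th and `z` the `n`-th member of `a6`. -/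
def zMat : Mat := atoms.map fun r => r.map fun m => cat 360 (a6.map fun _ => m)

/-- The number with exactly its `N` lowest bits set. -/
def onesN (N : ℕ) : ℕ := Nat.sub (Nat.pow 2 N) 1

theorem testBit_onesN (N i : ℕ) : (onesN N).testBit i = decide (i < N) :=
  Nat.testBit_two_pow_sub_one N i

theorem onesN_lt (N : ℕ) : onesN N < 2 ^ N := Nat.sub_lt (Nat.two_pow_pos N) one_pos

/-- One set bit for each member of `a6`. -/
def full : ℕ := onesN 360

/-- The matrix of `x` for all pairs `(x, z)`, in the numbering of `zMat`. -/
def xMat : Mat := ofFn fun i => ofFn fun j =>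
  cat 360 (a6.map fun c => bif (c.get i).beq j then full else 0)

theorem atoms_lt (i j : Fin 6) : (atoms.get i).get j < 2 ^ 360 := by
  rw [atoms, get_ofFn, get_ofFn, ← a6_length]
  exact maskOf_lt _ _

theorem fam_zMat {k n : ℕ} (hk : k < a6.length) (hn : n < a6.length) {π : Perm (Fin 6)}
    (h : Rep a6[n] π) : Fam zMat (360 * k + n) π := by
  intro i j
  have hb : ∀ b ∈ a6.map (fun _ => (atoms.get i).get j), b < 2 ^ 360 := by
    intro b hb
    obtain ⟨c, -, rfl⟩ := List.mem_map.1 hb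
    exact atoms_lt i j
  rw [zMat, get_map, get_map, testBit_cat _ hb _ _ (by simpa using hk) (a6_length ▸ hn),
    List.getElem_map]
  exact fam_atoms n hn π h i j

theorem fam_xMat {k n : ℕ} (hk : k < a6.length) (hn : n < a6.length) {π : Perm (Fin 6)}
    (h : Rep a6[k] π) : Fam xMat (360 * k + n) π := by
  intro i j
  have hb : ∀ b ∈ a6.map (fun c => bif (c.get i).beq j then full else 0), b < 2 ^ 360 := by
    intro b hb
    obtain ⟨c, -, rfl⟩ := List.mem_map.1 hb
    cases (c.get i).beq j
    · exact Nat.two_pow_pos 360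
    · exact onesN_lt 360
  have hn' : n < 360 := a6_length ▸ hn
  rw [xMat, get_ofFn, get_ofFn, testBit_cat _ hb _ _ (by simpa using hk) hn',
    List.getElem_map, h i]
  have e : ((π i : ℕ).beq j) = decide (π i = j) := by
    rw [Bool.eq_iff_iff, Nat.beq_eq, decide_eq_true_iff, Fin.val_inj]
  rw [e]
  by_cases hij : π i = j <;> simp only [hij, decide_true, decide_false, cond_true, cond_false]
  · rw [full, testBit_onesN, decide_eq_true hn']
  · simp

/-- The bit positions at which `M` is the matrix of the permutation coded by `c`. -/
def single (M : Mat) (c : Code) : ℕ :=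
  Nat.land (Nat.land (Nat.land (M.a0.get c.a0) (M.a1.get c.a1))
    (Nat.land (M.a2.get c.a2) (M.a3.get c.a3))) (Nat.land (M.a4.get c.a4) (M.a5.get c.a5))

/-- All entries are below six. -/
def small (c : Code) : Bool :=
  (Nat.ble c.a0 5 && Nat.ble c.a1 5) && (Nat.ble c.a2 5 && Nat.ble c.a3 5) &&
    (Nat.ble c.a4 5 && Nat.ble c.a5 5)

theorem get_le_of_small {c : Code} (h : small c = true) (i : Fin 6) : c.get i < 6 := by
  simp only [small, Bool.and_eq_true, Nat.ble_eq] at h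
  obtain ⟨⟨⟨h0, h1⟩, h2, h3⟩, h4, h5⟩ := h
  fin_cases i
  exacts [Nat.lt_succ_of_le h0, Nat.lt_succ_of_le h1, Nat.lt_succ_of_le h2, Nat.lt_succ_of_le h3,
    Nat.lt_succ_of_le h4, Nat.lt_succ_of_le h5]

theorem get_single {M : Mat} {n : ℕ} {c : Code} (h : (single M c).testBit n = true)
    (i : Fin 6) : ((M.get i).get (c.get i)).testBit n = true := by
  have e : single M c = (((M.a0.get c.a0) &&& (M.a1.get c.a1)) &&&
    ((M.a2.get c.a2) &&& (M.a3.get c.a3))) &&& ((M.a4.get c.a4) &&& (M.a5.get c.a5)) := rfl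
  rw [e] at h
  simp only [Nat.testBit_and, Bool.and_eq_true] at h
  obtain ⟨⟨⟨h0, h1⟩, h2, h3⟩, h4, h5⟩ := h
  fin_cases i <;> assumption

theorem rep_of_single {M : Mat} {n : ℕ} {c : Code} {π : Perm (Fin 6)} (hM : Fam M n π)
    (hc : small c = true) (h : (single M c).testBit n = true) : Rep c π := by
  intro i
  have h1 := hM i ⟨c.get i, get_le_of_small hc i⟩
  rw [get_single h i, eq_comm, decide_eq_true_iff] at h1
  rw [h1]

/-- Rearranging the rows multiplies on the right, whereas rearranging every row (`Fam.perm`)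
multiplies on the left. -/
theorem Fam.rows {M : Mat} {n : ℕ} {π ρ : Perm (Fin 6)} {c : Code}
    (hM : Fam M n π) (hc : Rep c ρ) : Fam (M.perm c) n (π * ρ) := by
  intro i
  rw [Six.perm, get_ofFn, hc i]
  exact hM (ρ i)

/-- The code is that of a permutation. -/
def isPerm (c : Code) : Bool := small c && beqc (mulc (invc c) c) onec

theorem get_onec (i : Fin 6) : onec.get i = i := by fin_cases i <;> rfl

theorem exists_rep {c : Code} (h : isPerm c = true) : ∃ π, Rep c π := by
  rw [isPerm, Bool.and_eq_true] at h
  have hs := get_le_of_small h.1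
  have hi : ∀ i : Fin 6, (invc c).get (c.get i) = i := by
    intro i
    rw [← get_ofFn (fun i => (invc c).get (c.get i)) i]
    exact (congrArg (fun d : Code => d.get i) (eq_of_beqc h.2)).trans (get_onec i)
  have inj : Function.Injective fun i : Fin 6 => (⟨c.get i, hs i⟩ : Fin 6) := by
    intro i j hij
    have := congrArg Fin.val hij
    simp only at this
    rw [Fin.ext_iff, ← hi i, ← hi j, this]
  exact ⟨Equiv.ofBijective _ (Finite.injective_iff_bijective.1 inj), fun i => rfl⟩

/-- Every even permutation has the form `c * r * c⁻¹` with `c` in `cs` and `r` in `rs`. This is tested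
as `a * c = c * r`, for all even `a` at once, the union of the resulting sets being everything. -/
def cover (cs rs : List Code) : Bool :=
  (cs.all isPerm && rs.all small) &&
  Nat.beq (cs.foldr (fun c m => rs.foldr (fun r m => Nat.lor (single (atoms.perm c) (mulc c r)) m) m) 0)
    full

theorem testBit_foldr {α : Type} (f : α → ℕ → ℕ) (n : ℕ) (p : α → Prop) (l : List α) (m : ℕ)
    (hf : ∀ a ∈ l, ∀ m, (f a m).testBit n = true → p a ∨ m.testBit n = true)
    (h : (l.foldr f m).testBit n = true) : (∃ a ∈ l, p a) ∨ m.testBit n = true := by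
  induction l with
  | nil => exact Or.inr h
  | cons a l ih =>
    rcases hf a (by simp) _ h with h | h
    · exact Or.inl ⟨a, by simp, h⟩
    · rcases ih (fun b hb => hf b (by simp [hb])) h with ⟨b, hb, h⟩ | h
      · exact Or.inl ⟨b, by simp [hb], h⟩
      · exact Or.inr h

theorem testBit_lor {a b n : ℕ} (h : (Nat.lor a b).testBit n = true) :
    a.testBit n = true ∨ b.testBit n = true := by
  have := Nat.testBit_or a b n
  rw [← Bool.or_eq_true, ← this]; exact h

theorem cover_sound {cs rs : List Code} (h : cover cs rs = true) {π : Perm (Fin 6)}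
    (hπ : Perm.sign π = 1) :
    ∃ c ∈ cs, ∃ σ, Rep c σ ∧ ∃ r ∈ rs, Rep r (σ⁻¹ * π * σ) := by
  rw [cover, Bool.and_eq_true, Bool.and_eq_true, List.all_eq_true, List.all_eq_true,
    Nat.beq_eq] at h
  obtain ⟨⟨hc, hr⟩, h⟩ := h
  obtain ⟨n, hn, hrep⟩ := exists_a6 hπ
  have hA := fam_atoms n hn π hrep
  have hfull : full.testBit n = true := by
    rw [full, testBit_onesN]
    exact decide_eq_true (a6_length ▸ hn)
  rw [← h] at hfull
  rcases testBit_foldr _ n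
    (fun c => ∃ r ∈ rs, (single (atoms.perm c) (mulc c r)).testBit n = true) _ _
    (fun c _ m hm => testBit_foldr _ n _ _ _ (fun r _ m hm => testBit_lor hm) hm) hfull with h | h
  · obtain ⟨c, hcm, r, hrm, hb⟩ := h
    obtain ⟨σ, hσ⟩ := exists_rep (hc c hcm)
    refine ⟨c, hcm, σ, hσ, r, hrm, ?_⟩
    have hr' := get_le_of_small (hr r hrm)
    have hg : ∀ i : Fin 6, (mulc c r).get i = σ ⟨r.get i, hr' i⟩ := by
      intro i
      rw [mulc, get_ofFn, ← hσ]
    have hM := hA.rows hσ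
    intro i
    have h1 := hM i ⟨_, (hg i).trans_lt (Fin.isLt _)⟩
    rw [get_single hb i, eq_comm, decide_eq_true_iff, Fin.ext_iff] at h1
    simp only [hg i, Fin.val_inj] at h1
    rw [mul_assoc, Perm.mul_apply, h1]
    exact congrArg Fin.val (σ.symm_apply_apply ⟨r.get i, hr' i⟩).symm
  · simp at h

/-! ### Evaluating the relations on all pairs of even permutations -/

/-- The family of `z⁻¹`. -/
def zInv : Mat := tr zMat
/-- The family of `x⁻¹`. -/
def xInv : Mat := tr xMat
/-- The family of `x⁻¹ * z`. -/
def xizMat : Mat := zMat.map (appT xMat)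
/-- The family of `z * x`. -/
def zxMat : Mat := xMat.map (appT zInv)
/-- The family of `x⁻¹ * z⁻¹`. -/
def xiziMat : Mat := zInv.map (appT xMat)
/-- The family of `(z * x * x)⁻¹`. -/
def zxxInv : Mat := xiziMat.map (appT xMat)
/-- The family of `z⁻¹ * x⁻¹`. -/
def zixiMat : Mat := xInv.map (appT zMat)
/-- The family of `x⁻¹ * u⁻¹ * x⁻¹ * z⁻¹`. -/
def mat2 (u : Code) : Mat := (xiziMat.map fun r => r.perm u).map (appT xMat)
/-- The family of `z⁻¹ * u⁻¹ * z⁻¹ * x⁻¹ * z⁻¹`. -/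
def mat3 (u : Code) : Mat := ((xiziMat.map (appT zMat)).map fun r => r.perm u).map (appT zMat)
/-- The family of the inverses of `mat3`. -/
def mat3T (u : Code) : Mat := tr (mat3 u)

/-- The pairs `(x, z)` for which the two sides of `Rels.e2` agree at the point `i`. -/
def test2 (u v : Code) (i : ℕ) : ℕ :=
  dot (((mat2 u).get (v.get i)).perm u)
    (appT zInv ((xInv.get ((invc v).get ((invc u).get i))).perm v))

/-- The pairs `(x, z)` for which the two sides of `Rels.e4` agree at the point `i`. -/
def test4 (u v : Code) (i : ℕ) : ℕ :=
  dot (appT zInv ((xizMat.get (u.get (v.get i))).perm v))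
    ((zxMat.get i).perm (mulc v (mulc u u)))

/-- The pairs `(x, z)` for which the two sides of `Rels.e6` agree at the point `i`. -/
def test6 (u v : Code) (i : ℕ) : ℕ :=
  dot (appT zxxInv ((zInv.get ((invc u).get i)).perm (invc v)))
    ((zixiMat.get ((invc v).get i)).perm (mulc (invc u) (invc v)))

/-- The pairs `(x, z)` for which the two sides of `Rels.e3` agree at the point `i`. -/
def test3 (u v : Code) (i : ℕ) : ℕ :=
  dot (appT (mat3T u) (((xMat.get i).perm (invc u)).perm (invc v)))
    ((xInv.get ((invc u).get i)).perm v)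

/-- The four tests at each of the six points. -/
def tests (u v : Code) : List ℕ :=
  (List.range 6).flatMap fun i => [test2 u v i, test4 u v i, test6 u v i, test3 u v i]

/-- The intersection of `s` with the members of the list is contained in `k`. Intersecting stops as
soon as containment is reached. -/
def sieve (k : ℕ) : List ℕ → ℕ → Bool
  | [], s => Nat.beq (Nat.lor s k) k
  | t :: l, s => bif Nat.beq (Nat.lor s k) k then true else sieve k l (Nat.land s t)

theorem sieve_sound {k n : ℕ} {l : List ℕ} {s : ℕ} (h : sieve k l s = true)
    (hs : s.testBit n = true) (hl : ∀ t ∈ l, t.testBit n = true) : k.testBit n = true := by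
  have key : ∀ s, Nat.beq (Nat.lor s k) k = true → s.testBit n = true → k.testBit n = true := by
    intro s h hs
    rw [Nat.beq_eq] at h
    rw [← h]
    exact (Nat.testBit_or s k n).trans (by simp [hs])
  induction l generalizing s with
  | nil => exact key s h hs
  | cons t l ih =>
    rw [sieve] at h
    cases hb : Nat.beq (Nat.lor s k) k with
    | true => exact key s hb hs
    | false =>
      rw [hb, cond_false] at h
      refine ih h ((Nat.testBit_and s t n).trans ?_) fun t ht => hl t (by simp [ht])
      simp [hs, hl t]

section
variable {H : Type*} [Group H] {u v w x y z : H}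

/-- The six relations of the Weber–Seifert presentation, for elements of an arbitrary group. -/
structure Rels (u v w x y z : H) : Prop where
  h1 : u * x * y⁻¹ * v⁻¹ * w = 1
  h2 : u * y * z⁻¹ * w⁻¹ * x = 1
  h3 : u * z * v⁻¹ * x⁻¹ * y = 1
  h4 : u * v * w⁻¹ * y⁻¹ * z = 1
  h5 : u * w * x⁻¹ * z⁻¹ * v = 1
  h6 : v * x * z * w * y = 1

theorem Rels.y_eq (h : Rels u v w x y z) : y = x * v * z⁻¹ * u⁻¹ := by
  have := eq_inv_of_mul_eq_one_right h.h3
  rw [this]; group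

theorem Rels.w_eq (h : Rels u v w x y z) : w = u⁻¹ * v⁻¹ * z * x := by
  have h5 : w = u⁻¹ * (u * w * x⁻¹ * z⁻¹ * v) * v⁻¹ * z * x := by group
  rw [h5, h.h5]; group

/-- The first relation after elimination of `w` and `y`, written as an equality of two words so that
both can be evaluated at a point by few matrix operations. The lemmas `e3`, `e4`, `e6` treat the
second, fourth and last relation in the same way. -/
theorem Rels.e2 (h : Rels u v w x y z) :
    u⁻¹ * (x⁻¹ * u⁻¹ * (x⁻¹ * z⁻¹)) * v = z * v⁻¹ * x⁻¹ * v⁻¹ * u⁻¹ := by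
  have h1 := h.h1
  rw [h.y_eq, h.w_eq] at h1
  have e : u⁻¹ * (x⁻¹ * u⁻¹ * (x⁻¹ * z⁻¹)) * v = z * v⁻¹ * x⁻¹ * v⁻¹ * u⁻¹ * v⁻¹ * z * x *
    (u * x * (x * v * z⁻¹ * u⁻¹)⁻¹ * v⁻¹ * (u⁻¹ * v⁻¹ * z * x))⁻¹ * (x⁻¹ * z⁻¹ * v) := by group
  rw [e, h1]; group

theorem Rels.e3 (h : Rels u v w x y z) :
    z⁻¹ * (u⁻¹ * (z⁻¹ * (x⁻¹ * z⁻¹))) * v * u * x = v⁻¹ * x⁻¹ * u⁻¹ := by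
  have h2 := h.h2
  rw [h.y_eq, h.w_eq] at h2
  have e : z⁻¹ * (u⁻¹ * (z⁻¹ * (x⁻¹ * z⁻¹))) * v * u * x = v⁻¹ * x⁻¹ * u⁻¹ *
    (u * (x * v * z⁻¹ * u⁻¹) * z⁻¹ * (u⁻¹ * v⁻¹ * z * x)⁻¹ * x) := by group
  rw [e, h2]; group

theorem Rels.e4 (h : Rels u v w x y z) :
    z * v⁻¹ * (x⁻¹ * z) * u * v = (v * (u * u))⁻¹ * (z * x) := by
  have h4 := h.h4
  rw [h.y_eq, h.w_eq] at h4
  have e : z * v⁻¹ * (x⁻¹ * z) * u * v = (v * (u * u))⁻¹ * (z * x) * (u * v)⁻¹ *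
    (u * v * (u⁻¹ * v⁻¹ * z * x)⁻¹ * (x * v * z⁻¹ * u⁻¹)⁻¹ * z) * (u * v) := by group
  rw [e, h4]; group

theorem Rels.e6 (h : Rels u v w x y z) :
    z * x * x * v * z⁻¹ * u⁻¹ = v * u * (z⁻¹ * x⁻¹) * v⁻¹ := by
  have h6 := h.h6
  rw [h.y_eq, h.w_eq] at h6
  have e : z * x * x * v * z⁻¹ * u⁻¹ = v * u * (z⁻¹ * x⁻¹) * v⁻¹ *
    (v * x * z * (u⁻¹ * v⁻¹ * z * x) * (x * v * z⁻¹ * u⁻¹)) := by group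
  rw [e, h6]; group

end

theorem testBit_dot_of_eq {r s : Vec} {n : ℕ} {i j : Fin 6} (hr : OneHot r n i)
    (hs : OneHot s n j) (h : i = j) : (dot r s).testBit n = true := by
  rw [testBit_dot_oneHot hr hs, h, decide_eq_true rfl]

theorem Rep.get_inv {c : Code} {π : Perm (Fin 6)} (h : Rep c π) (i : Fin 6) :
    (invc c).get i = (π⁻¹ i : Fin 6) := h.inv i

theorem tests_sound {u v : Code} {U V W X Y Z : Perm (Fin 6)} {n : ℕ} (hu : Rep u U)
    (hv : Rep v V) (hx : Fam xMat n X) (hz : Fam zMat n Z) (h : Rels U V W X Y Z) :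
    ∀ t ∈ tests u v, t.testBit n = true := by
  have zi : Fam zInv n Z⁻¹ := hz.tr
  have xi : Fam xInv n X⁻¹ := hx.tr
  have xiz : Fam xizMat n (X⁻¹ * Z) := hx.comp hz
  have zx : Fam zxMat n (Z * X) := (zi.comp hx).congr (by rw [inv_inv])
  have xizi : Fam xiziMat n (X⁻¹ * Z⁻¹) := hx.comp zi
  have zxxi : Fam zxxInv n (Z * X * X)⁻¹ := (hx.comp xizi).congr (by group)
  have zixi : Fam zixiMat n (Z⁻¹ * X⁻¹) := hz.comp xi
  have m2 : Fam (mat2 u) n (X⁻¹ * (U⁻¹ * (X⁻¹ * Z⁻¹))) := hx.comp (xizi.perm hu)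
  have m3 : Fam (mat3T u) n (Z⁻¹ * (U⁻¹ * (Z⁻¹ * (X⁻¹ * Z⁻¹))))⁻¹ :=
    (hz.comp ((hz.comp xizi).perm hu)).tr
  intro t ht
  obtain ⟨i, hi, ht⟩ := List.mem_flatMap.1 ht
  lift i to Fin 6 using List.mem_range.1 hi
  simp only [List.mem_cons, List.not_mem_nil, or_false] at ht
  rcases ht with rfl | rfl | rfl | rfl
  · rw [test2, hv i, hu.get_inv, hv.get_inv]
    refine testBit_dot_of_eq ((m2 _).perm hu) (OneHot.appT zi ((xi _).perm hv)) ?_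
    simpa using congrArg (fun g : Perm (Fin 6) => g i) h.e2
  · rw [test4, hv i, hu]
    refine testBit_dot_of_eq (OneHot.appT zi ((xiz _).perm hv))
      ((zx i).perm (hv.mul (hu.mul hu))) ?_
    simpa using congrArg (fun g : Perm (Fin 6) => g i) h.e4
  · rw [test6, hu.get_inv, hv.get_inv]
    refine testBit_dot_of_eq (OneHot.appT zxxi ((zi _).perm hv.inv))
      ((zixi _).perm (hu.inv.mul hv.inv)) ?_
    simpa using congrArg (fun g : Perm (Fin 6) => g i) h.e6
  · rw [test3, hu.get_inv]
    refine testBit_dot_of_eq (OneHot.appT m3 (((hx i).perm hu.inv).perm hv.inv))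
      ((xi _).perm hv) ?_
    simpa using congrArg (fun g : Perm (Fin 6) => g i) h.e3

/-- The bit positions of the listed pairs `(x, z)`. -/
def known (l : List (Code × Code)) : ℕ :=
  l.foldr (fun p m => Nat.lor (Nat.land (single xMat p.1) (single zMat p.2)) m) 0

/-- One set bit for each pair of even permutations. -/
def ones : ℕ := onesN (360 * 360)

/-- Every pair `(x, z)` of even permutations that satisfies the relations together with `u` and `v` is
listed in `l`. -/
def siftPair (u v : Code) (l : List (Code × Code)) : Bool :=
  (l.all fun p => small p.1 && small p.2) && sieve (known l) (tests u v) ones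

theorem siftPair_sound {u v : Code} {l : List (Code × Code)} {U V W X Y Z : Perm (Fin 6)}
    (hs : siftPair u v l = true)
    (hu : Rep u U) (hv : Rep v V) (hX : Perm.sign X = 1) (hZ : Perm.sign Z = 1)
    (h : Rels U V W X Y Z) : ∃ p ∈ l, Rep p.1 X ∧ Rep p.2 Z := by
  obtain ⟨k, hk, hkX⟩ := exists_a6 hX
  obtain ⟨n, hn, hnZ⟩ := exists_a6 hZ
  have hx := fam_xMat hk hn hkX
  have hz := fam_zMat hk hn hnZ
  rw [siftPair, Bool.and_eq_true, List.all_eq_true] at hs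
  obtain ⟨hsm, hs⟩ := hs
  have ho : ones.testBit (360 * k + n) = true := by
    rw [ones, testBit_onesN]
    rw [a6_length] at hk hn
    exact decide_eq_true (by omega)
  have hb := sieve_sound hs ho (tests_sound hu hv hx hz h)
  rcases testBit_foldr _ _ (fun p : Code × Code =>
      (Nat.land (single xMat p.1) (single zMat p.2)).testBit (360 * k + n) = true) _ _
      (fun p _ m hm => testBit_lor hm) hb with ⟨p, hp, hb⟩ | hb
  · have hp' := hsm p hp
    rw [Bool.and_eq_true] at hp'
    have hb' := (Nat.testBit_and _ _ _).symm.trans hb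
    rw [Bool.and_eq_true] at hb'
    exact ⟨p, hp, rep_of_single hx hp'.1 hb'.1, rep_of_single hz hp'.2 hb'.2⟩
  · simp at hb

/-! ### Subgroups of index six and transitive permutation representations -/

/-- The relations hold in `G`; here `_root_` marks the generators of `G`. -/
theorem rels_G : Rels (_root_.u) _root_.v _root_.w _root_.x _root_.y _root_.z where
  h1 := (QuotientGroup.eq_one_iff _).2 (Subgroup.subset_normalClosure (by simp [wsRels]))
  h2 := (QuotientGroup.eq_one_iff _).2 (Subgroup.subset_normalClosure (by simp [wsRels]))
  h3 := (QuotientGroup.eq_one_iff _).2 (Subgroup.subset_normalClosure (by simp [wsRels]))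
  h4 := (QuotientGroup.eq_one_iff _).2 (Subgroup.subset_normalClosure (by simp [wsRels]))
  h5 := (QuotientGroup.eq_one_iff _).2 (Subgroup.subset_normalClosure (by simp [wsRels]))
  h6 := (QuotientGroup.eq_one_iff _).2 (Subgroup.subset_normalClosure (by simp [wsRels]))

theorem Rels.map {H H' : Type*} [Group H] [Group H'] (f : H →* H') {u v w x y z : H}
    (h : Rels u v w x y z) : Rels (f u) (f v) (f w) (f x) (f y) (f z) where
  h1 := by simpa using congrArg f h.h1
  h2 := by simpa using congrArg f h.h2
  h3 := by simpa using congrArg f h.h3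
  h4 := by simpa using congrArg f h.h4
  h5 := by simpa using congrArg f h.h5
  h6 := by simpa using congrArg f h.h6

/-- `G` is generated by `u, v, x, z`. -/
theorem mem_of_gens (K : Subgroup G) (hu : _root_.u ∈ K) (hv : _root_.v ∈ K)
    (hx : _root_.x ∈ K) (hz : _root_.z ∈ K) (g : G) : g ∈ K := by
  have hy : _root_.y ∈ K := rels_G.y_eq ▸
    K.mul_mem (K.mul_mem (K.mul_mem hx hv) (K.inv_mem hz)) (K.inv_mem hu)
  have hw : _root_.w ∈ K := rels_G.w_eq ▸
    K.mul_mem (K.mul_mem (K.mul_mem (K.inv_mem hu) (K.inv_mem hv)) hz) hx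
  have h : Subgroup.closure (Set.range (PresentedGroup.of : Gen → G)) ≤ K := by
    rw [Subgroup.closure_le]
    rintro _ ⟨i, rfl⟩
    cases i <;> assumption
  rw [PresentedGroup.closure_range_of] at h
  exact h (Subgroup.mem_top g)

theorem hom_ext {H : Type*} [Group H] {φ ψ : G →* H} (hu : φ _root_.u = ψ _root_.u)
    (hv : φ _root_.v = ψ _root_.v) (hx : φ _root_.x = ψ _root_.x)
    (hz : φ _root_.z = ψ _root_.z) (g : G) : φ g = ψ g :=
  mem_of_gens (φ.eqLocus ψ) hu hv hx hz g

/-- The assignment of group elements to the generators. -/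
def genMap {H : Type*} (u v w x y z : H) : Gen → H
  | .u => u
  | .v => v
  | .w => w
  | .x => x
  | .y => y
  | .z => z

/-- Elements satisfying the relations are the images of the generators under a homomorphism. -/
theorem exists_hom {H : Type*} [Group H] {u v w x y z : H} (h : Rels u v w x y z) :
    ∃ φ : G →* H, φ _root_.u = u ∧ φ _root_.v = v ∧ φ _root_.w = w ∧ φ _root_.x = x ∧
      φ _root_.y = y ∧ φ _root_.z = z := by
  have hr : ∀ r ∈ wsRels, FreeGroup.lift (genMap u v w x y z) r = 1 := by
    intro r hr
    simp only [wsRels, Set.mem_insert_iff, Set.mem_singleton_iff] at hr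
    rcases hr with rfl | rfl | rfl | rfl | rfl | rfl
    · simpa [genMap] using h.h1
    · simpa [genMap] using h.h2
    · simpa [genMap] using h.h3
    · simpa [genMap] using h.h4
    · simpa [genMap] using h.h5
    · simpa [genMap] using h.h6
  exact ⟨PresentedGroup.toGroup hr, PresentedGroup.toGroup.of hr, PresentedGroup.toGroup.of hr,
    PresentedGroup.toGroup.of hr, PresentedGroup.toGroup.of hr, PresentedGroup.toGroup.of hr,
    PresentedGroup.toGroup.of hr⟩

/-- The generators have order `5` in the abelianization of `G`, so they act evenly. -/
theorem Rels.sign {u v w x y z : Perm (Fin 6)} (h : Rels u v w x y z) :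
    Perm.sign u = 1 ∧ Perm.sign v = 1 ∧ Perm.sign x = 1 ∧ Perm.sign z = 1 := by
  have key : ∀ u v w x y z : ℤˣ, u * x * y⁻¹ * v⁻¹ * w = 1 → u * y * z⁻¹ * w⁻¹ * x = 1 →
      u * z * v⁻¹ * x⁻¹ * y = 1 → u * v * w⁻¹ * y⁻¹ * z = 1 → u * w * x⁻¹ * z⁻¹ * v = 1 →
      v * x * z * w * y = 1 → u = 1 ∧ v = 1 ∧ x = 1 ∧ z = 1 := by decide
  have hs := h.map Perm.sign
  exact key _ _ _ _ _ _ hs.h1 hs.h2 hs.h3 hs.h4 hs.h5 hs.h6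

/-- Transitivity of a permutation representation, tested from the point `0`. -/
def IsTrans (φ : G →* Perm (Fin 6)) : Prop := ∀ i, ∃ g, φ g 0 = i

/-- The stabilizer of the point `0`. -/
def stab (φ : G →* Perm (Fin 6)) : Subgroup G :=
  (MulAction.stabilizer (Perm (Fin 6)) (0 : Fin 6)).comap φ

theorem mem_stab {φ : G →* Perm (Fin 6)} {g : G} : g ∈ stab φ ↔ φ g 0 = 0 := Iff.rfl

theorem IsTrans.index {φ : G →* Perm (Fin 6)} (h : IsTrans φ) : (stab φ).index = 6 := by
  have key : ∀ a b : G, a⁻¹ * b ∈ stab φ ↔ φ a 0 = φ b 0 := fun a b => by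
    rw [mem_stab, map_mul, map_inv, Perm.mul_apply, Perm.inv_eq_iff_eq, eq_comm]
  have e : G ⧸ stab φ ≃ Fin 6 := by
    refine Equiv.ofBijective (Quotient.lift (fun g => φ g 0) fun a b hab =>
      (key a b).1 (QuotientGroup.leftRel_apply.1 hab)) ⟨?_, fun i => ?_⟩
    · rintro ⟨a⟩ ⟨b⟩ hab
      exact QuotientGroup.eq.2 ((key a b).2 hab)
    · obtain ⟨g, hg⟩ := h i
      exact ⟨(g : G ⧸ stab φ), hg⟩
  rw [Subgroup.index, Nat.card_congr e, Nat.card_fin]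

/-- The action on the cosets of a subgroup of index six, with the trivial coset numbered `0`. -/
theorem exists_stab_eq {K : Subgroup G} (hK : K.index = 6) :
    ∃ φ, IsTrans φ ∧ stab φ = K := by
  have hf : Finite (G ⧸ K) := Nat.finite_of_card_ne_zero (by
    rw [← Subgroup.index, hK]; decide)
  let e₀ : G ⧸ K ≃ Fin 6 := Finite.equivFinOfCardEq hK
  let e : G ⧸ K ≃ Fin 6 := e₀.trans (swap (e₀ (1 : G)) 0)
  have he : e (1 : G) = 0 := swap_apply_left _ _
  let φ : G →* Perm (Fin 6) := e.permCongrHom.toMonoidHom.comp (MulAction.toPermHom G (G ⧸ K))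
  have hφ : ∀ g, φ g 0 = e (g : G) := by
    intro g
    change e (g • e.symm 0) = _
    rw [← he, e.symm_apply_apply]
    change e ((g * 1 : G) : G ⧸ K) = _
    rw [mul_one]
  refine ⟨φ, fun i => ?_, ?_⟩
  · obtain ⟨g, hg⟩ := QuotientGroup.mk_surjective (e.symm i)
    exact ⟨g, by rw [hφ, hg, e.apply_symm_apply]⟩
  · ext g
    rw [mem_stab, hφ, ← he, e.apply_eq_iff_eq, QuotientGroup.eq, mul_one, inv_mem_iff]

/-- The conjugacy relation on subgroups of index six. -/
def Cj (K₁ K₂ : {K : Subgroup G // K.index = 6}) : Prop :=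
  ∃ g : G, Subgroup.map (MulAut.conj g).toMonoidHom K₁.1 = K₂.1

theorem mem_conj {K : Subgroup G} {g h : G} :
    h ∈ Subgroup.map (MulAut.conj g).toMonoidHom K ↔ g⁻¹ * h * g ∈ K := by
  constructor
  · rintro ⟨k, hk, rfl⟩
    simpa [mul_assoc] using hk
  · intro hk
    exact ⟨_, hk, by simp [mul_assoc]⟩

theorem cj_equivalence : Equivalence Cj where
  refl K := ⟨1, by ext; rw [mem_conj]; simp⟩
  symm := by
    rintro K L ⟨g, hg⟩
    refine ⟨g⁻¹, ?_⟩
    ext h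
    rw [mem_conj, ← hg, mem_conj]
    simp [mul_assoc]
  trans := by
    rintro K L M ⟨g, hg⟩ ⟨k, hk⟩
    refine ⟨k * g, ?_⟩
    ext h
    rw [mem_conj, ← hk, mem_conj, ← hg, mem_conj]
    simp [mul_assoc]

/-- Equivalent transitive representations have conjugate point stabilizers. -/
theorem conj_stab_of_equiv {φ ψ : G →* Perm (Fin 6)} (hφ : IsTrans φ) {σ : Perm (Fin 6)}
    (h : ∀ g, ψ g = σ * φ g * σ⁻¹) :
    ∃ g : G, Subgroup.map (MulAut.conj g).toMonoidHom (stab φ) = stab ψ := by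
  obtain ⟨g, hg⟩ := hφ (σ⁻¹ 0)
  refine ⟨g, ?_⟩
  ext k
  rw [mem_conj, mem_stab, mem_stab, h, map_mul, map_mul, Perm.mul_apply, Perm.mul_apply, hg,
    map_inv, Perm.inv_eq_iff_eq, hg, Perm.mul_apply, Perm.mul_apply]
  exact Perm.eq_inv_iff_eq

/-- Transitive representations with conjugate point stabilizers are equivalent. -/
theorem equiv_of_conj_stab {φ ψ : G →* Perm (Fin 6)} (hφ : IsTrans φ)
    {g : G} (h : Subgroup.map (MulAut.conj g).toMonoidHom (stab φ) = stab ψ) :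
    ∃ σ : Perm (Fin 6), ∀ k, ψ k = σ * φ k * σ⁻¹ := by
  have key : ∀ a b : G, φ (a * g) 0 = φ (b * g) 0 ↔ ψ a 0 = ψ b 0 := by
    intro a b
    have := SetLike.ext_iff.1 h (b⁻¹ * a)
    rw [mem_conj, mem_stab, mem_stab, ← mul_assoc, mul_assoc, ← mul_inv_rev] at this
    rwa [map_mul, map_inv, Perm.mul_apply, Perm.inv_eq_iff_eq, map_mul ψ, map_inv,
      Perm.mul_apply, Perm.inv_eq_iff_eq] at this
  have ht : ∀ i, ∃ k, φ (k * g) 0 = i := fun i => by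
    obtain ⟨k, hk⟩ := hφ i
    exact ⟨k * g⁻¹, by rwa [inv_mul_cancel_right]⟩
  choose s hs using ht
  have hinj : Function.Injective fun i => ψ (s i) 0 := fun i j e => by
    rw [← hs i, ← hs j]
    exact (key _ _).2 e
  let σ : Perm (Fin 6) := Equiv.ofBijective _ (Finite.injective_iff_bijective.1 hinj)
  have hσ : ∀ k, σ (φ (k * g) 0) = ψ k 0 := fun k => (key _ _).1 (hs _)
  refine ⟨σ, fun k => ?_⟩
  rw [eq_mul_inv_iff_mul_eq]
  ext i : 1
  rw [Perm.mul_apply, Perm.mul_apply, ← hs i, hσ, ← Perm.mul_apply (φ k), ← Perm.mul_apply (ψ k),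
    ← map_mul, ← map_mul, ← mul_assoc, hσ]

/-! ### The list of representations and its completeness -/

/-- Representatives `(u, v, x, z)` of the equivalence classes of representations `G → Perm (Fin 6)`, as
a tree. The first level lists `u` up to conjugacy, the second lists, for given `u`, values of `v` up
to conjugacy by the centralizer of `u`, and the third lists `(x, z)` up to simultaneous conjugacy by
the common centralizer of `u` and `v`. A permutation is written as the decimal number with digits
`π 0, …, π 5`. -/
def table : List (ℕ × List (ℕ × List (ℕ × ℕ))) := [
  (12345, [(12345, [(542103, 302451), (12345, 12345)]), (12453, []), (13254, []),
    (23451, [(51234, 34512), (45123, 12345), (34512, 45123), (23451, 23451), (12345, 51234)]),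
    (103452, []), (120453, [])]),
  (12453, [(12345, []), (12453, []), (12534, []), (13254, []), (13425, []),
    (13542, [(401523, 215403)]), (21354, []), (23145, []),
    (23451, [(510423, 125430), (130254, 52314)]), (23514, []), (34125, []), (34251, []),
    (34512, []), (103245, []), (103452, []), (103524, []), (120345, []), (120453, []),
    (120534, []), (123054, [(410253, 132450), (15324, 130254)]), (123405, []), (123540, []),
    (134052, []), (134205, []), (134520, []), (135024, []), (135240, []), (135402, []),
    (345021, [])]),
  (13254, [(12345, []), (12453, []), (13254, []), (14523, []),
    (21354, [(52431, 21435), (23514, 43215)]),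
    (21435, [(432105, 504312), (210543, 352041), (53241, 51234), (52431, 21354)]), (23145, []),
    (23451, [(53241, 21435)]), (24153, []), (24315, []), (24531, []), (102354, []), (102435, []),
    (103452, []), (104532, []), (120345, []), (120453, []), (123054, []), (123405, []),
    (124035, [(250341, 45312)]), (124350, []), (124503, []), (230145, []), (230451, []),
    (231054, []), (231405, []), (234501, []), (240153, []),
    (240315, [(314025, 35142), (301542, 432105)]), (240531, []), (241035, []), (241350, []),
    (241503, []), (243051, []), (245130, [])]),
  (23451, [
    (12345, [(51234, 12345), (45123, 45123), (34512, 23451), (23451, 51234), (12345, 34512)]),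
    (12453, [(150432, 501432), (142053, 42351)]), (12534, []), (13254, [(21354, 21435)]),
    (13542, []), (14523, []), (15243, []), (15432, []),
    (23451, [(51234, 51234), (45123, 34512), (34512, 12345), (23451, 45123), (12345, 23451)]),
    (23514, []), (24153, []), (25134, []), (31524, [(540132, 130254), (54132, 35214)]),
    (34512, [(51234, 45123), (45123, 23451), (34512, 51234), (23451, 34512), (12345, 12345)]),
    (45123, [(51234, 34512), (45123, 12345), (34512, 45123), (23451, 23451), (12345, 51234)]),
    (51234, [(51234, 23451), (45123, 51234), (34512, 34512), (23451, 12345), (12345, 45123)]),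
    (102354, []), (102435, []), (102543, []), (103245, []), (103452, []), (103524, []),
    (104253, []), (104325, []), (104532, []), (105234, []), (105342, [(314025, 542310)]),
    (105423, []), (120345, []), (120453, []), (120534, []), (123054, []), (123405, []),
    (123540, []), (124035, []), (124350, []), (124503, []), (125043, []), (125304, []),
    (125430, []), (130254, [(453210, 254031), (421530, 405213), (12453, 142053)]), (130425, []),
    (130542, [(415023, 140235), (341205, 514032)]), (132045, []), (132450, []),
    (132504, [(251043, 145320)]), (134052, []), (134205, []), (134520, []),
    (135024, [(254031, 503214), (41532, 254103)]), (135240, [(204135, 310524)]), (135402, []),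
    (140235, [(532014, 451320), (314502, 145320)]), (140352, []), (140523, []),
    (142053, [(510423, 403125), (42351, 231054)]), (142305, []), (142530, [(205314, 350142)]),
    (143025, []), (143250, []), (143502, []), (145032, []), (145203, []),
    (145320, [(352104, 231540), (234015, 415230)]), (150243, []),
    (150324, [(542103, 130542), (301542, 415230)]),
    (150432, [(501432, 13425), (421530, 231054), (135024, 41532)]), (152034, []), (152340, []),
    (152403, []), (153042, []), (153204, []), (153420, []), (154023, []), (154230, []),
    (154302, [(501243, 234015)])]),
  (103452, [(12345, []), (12453, []), (12534, []), (13254, []), (14523, []), (21354, []),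
    (21435, []), (21543, []), (23145, []), (23451, []), (23514, []), (24153, []), (24315, []),
    (24531, []), (25134, []), (25341, []), (25413, []), (102354, []), (102543, []), (103452, []),
    (103524, [(205143, 201345)]), (105234, []), (120345, [(302145, 204135), (150243, 104532)]),
    (120453, []), (120534, []), (123054, []), (123405, []), (123540, []),
    (124035, [(504123, 421053), (340251, 540132), (103524, 205143)]), (124350, []),
    (124503, [(354012, 243510), (205143, 435012)]),
    (125043, [(345102, 521403), (241503, 150243), (120345, 302145)]), (125304, []), (125430, []),
    (230145, []), (230451, []), (230514, []), (231054, [(453021, 250413), (302514, 124503)]),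
    (231405, []), (231540, []), (234015, []), (234150, [(431502, 304521), (124503, 205143)]),
    (234501, []), (235041, []), (235104, []), (235410, [(501324, 354120), (431250, 125043)]),
    (240153, [(543201, 150243), (534102, 520431)]), (240315, []), (240531, []), (241035, []),
    (241350, []), (241503, [(302514, 540132)]), (243051, []), (245130, [])]),
  (120453, [(12345, []), (12453, []), (12534, []), (13254, []), (13425, []), (13542, []),
    (21354, []), (23451, []), (23514, []), (31452, []), (31524, []), (34125, []), (34251, []),
    (34512, []), (35142, []), (35214, [(145032, 524013), (43521, 153204)]), (35421, []),
    (103452, []), (103524, []), (120453, []), (120534, []), (134052, [(524130, 432510)]),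
    (134520, [(513024, 314502), (423150, 450231)]), (135024, []), (135402, []), (201534, []),
    (234501, []), (235104, []), (345021, [])])]

/-- The code given by the six decimal digits of `n`. -/
def P (n : ℕ) : Code :=
  ⟨n / 100000, n / 10000 % 10, n / 1000 % 10, n / 100 % 10, n / 10 % 10, n % 10⟩

/-- The centralizer of `u`. -/
def cent (u : Code) : List Code := s6.filter fun c => beqc (mulc c u) (mulc u c)

/-- The conjugate `s * c * s⁻¹`. -/
def conjc (s c : Code) : Code := mulc (mulc s c) (invc s)

/-- The conjugates of the listed pairs under the common centralizer of `u` and `v`. -/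
def sols (u v : Code) (l : List (ℕ × ℕ)) : List (Code × Code) :=
  l.flatMap fun q => ((cent u).filter fun c => beqc (mulc c v) (mulc v c)).map fun s =>
    (conjc s (P q.1), conjc s (P q.2))

/-- For the branch of the table at a given `u`: the listed `v` represent all even permutations up to
conjugacy by the centralizer of `u`, and for each of them the listed pairs `(x, z)` represent all
solutions. -/
def checkU (e : ℕ × List (ℕ × List (ℕ × ℕ))) : Bool :=
  cover (cent (P e.1)) (e.2.map fun f => P f.1) &&
    e.2.all fun f => f.2.all (fun q => isPerm (P q.1) && isPerm (P q.2)) &&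
      siftPair (P e.1) (P f.1) (sols (P e.1) (P f.1) f.2)

theorem s6_isPerm : s6.all isPerm = true := by decide +kernel

theorem cover_table : cover s6 (table.map fun e => P e.1) = true := by decide +kernel
theorem check0 : ((table.drop 0).take 1).all checkU = true := by decide +kernel
theorem check1 : ((table.drop 1).take 1).all checkU = true := by decide +kernel
theorem check2 : ((table.drop 2).take 1).all checkU = true := by decide +kernel
theorem check3 : ((table.drop 3).take 1).all checkU = true := by decide +kernel
theorem check4 : ((table.drop 4).take 1).all checkU = true := by decide +kernel
theorem check5 : ((table.drop 5).take 1).all checkU = true := by decide +kernel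
theorem check_table : table.all checkU = true := by
  have h : table = (table.drop 0).take 1 ++ (table.drop 1).take 1 ++ (table.drop 2).take 1 ++
      (table.drop 3).take 1 ++ (table.drop 4).take 1 ++ (table.drop 5).take 1 := rfl
  rw [h]
  simp only [List.all_append, check0, check1, check2, check3, check4, check5, Bool.and_self]

/-! ### Classification of the transitive representations -/

/-- Codes for the images of the four generators `u, v, x, z`. -/
structure Quad where
  u : Code
  v : Code
  x : Code
  z : Code

namespace Quad

/-- The image of `w`, as forced by the fifth relation. -/
def w (t : Quad) : Code := mulc (mulc (mulc (invc t.u) (invc t.v)) t.z) t.x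

/-- The image of `y`, as forced by the third relation. -/
def y (t : Quad) : Code := mulc (mulc (mulc t.x t.v) (invc t.z)) (invc t.u)

/-- The six relations. -/
def relc (t : Quad) : Bool :=
  beqc (mulc (mulc (mulc (mulc t.u t.x) (invc t.y)) (invc t.v)) t.w) onec &&
  beqc (mulc (mulc (mulc (mulc t.u t.y) (invc t.z)) (invc t.w)) t.x) onec &&
  beqc (mulc (mulc (mulc (mulc t.u t.z) (invc t.v)) (invc t.x)) t.y) onec &&
  beqc (mulc (mulc (mulc (mulc t.u t.v) (invc t.w)) (invc t.y)) t.z) onec &&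
  beqc (mulc (mulc (mulc (mulc t.u t.w) (invc t.x)) (invc t.z)) t.v) onec &&
  beqc (mulc (mulc (mulc (mulc t.v t.x) t.z) t.w) t.y) onec

/-- The codes are permutations satisfying the relations. -/
def valid (t : Quad) : Bool :=
  (isPerm t.u && isPerm t.v && isPerm t.x && isPerm t.z) && t.relc

/-- The set of points with characteristic bits `S` is invariant under the generators. -/
def invt (t : Quad) (S : ℕ) : Bool :=
  (List.range 6).all fun i => [t.u, t.v, t.x, t.z].all fun c =>
    S.testBit (c.get i) == S.testBit i

/-- Transitivity: an invariant set that contains the point `0` is everything. -/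
def trans (t : Quad) : Bool :=
  (List.range 64).all fun S => !(S.testBit 0) || S.beq 63 || !(t.invt S)

end Quad

/-- The number of points moved. -/
def moved (c : Code) : ℕ :=
  (bif c.a0.beq 0 then 0 else 1) + (bif c.a1.beq 1 then 0 else 1) +
    (bif c.a2.beq 2 then 0 else 1) + (bif c.a3.beq 3 then 0 else 1) +
    (bif c.a4.beq 4 then 0 else 1) + (bif c.a5.beq 5 then 0 else 1)

/-- The numbers of points moved by the images of the seven elements in `word`, as digits in base seven.
This is an invariant of the representation up to equivalence. -/
def Quad.key (t : Quad) : ℕ :=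
  [mulc t.u t.u, mulc (mulc (mulc t.u t.v) t.v) t.w, mulc (mulc (mulc t.u t.y) t.x) t.v,
    mulc (mulc t.w t.z) t.z, mulc (mulc (mulc t.v t.v) t.y) t.w, t.v, t.x].foldl
    (fun n c => 7 * n + moved c) 0

/-- The representations in the table. -/
def reps : List Quad :=
  table.flatMap fun e => e.2.flatMap fun f => f.2.map fun q => ⟨P e.1, P f.1, P q.1, P q.2⟩

/-- The transitive ones. -/
def transReps : List Quad := reps.filter Quad.trans

theorem reps_valid : reps.all Quad.valid = true := by decide +kernel

theorem transReps_length : transReps.length = 61 := by decide +kernel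

theorem transReps_nodup : (transReps.map Quad.key).Nodup := by decide +kernel

theorem moved_eq {c : Code} {π : Perm (Fin 6)} (h : Rep c π) : moved c = π.support.card := by
  have hm : ∀ i : Fin 6, (bif (c.get i).beq i then 0 else 1) = if π i ≠ i then 1 else 0 := by
    intro i
    rw [h i]
    by_cases e : π i = i
    · rw [e, show (i.val.beq i.val) = true from Nat.beq_refl _]
      simp
    · have : (π i).val.beq i.val = false := by
        rw [← Bool.not_eq_true, Nat.beq_eq]
        exact fun h => e (Fin.ext h)
      rw [this]
      simp [e]
  rw [Perm.support, Finset.card_filter, Fin.sum_univ_six, ← hm, ← hm, ← hm, ← hm, ← hm, ← hm]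
  rfl

/-- `φ` sends the generators `u, v, x, z` to the permutations coded by `t`. -/
structure Realizes (φ : G →* Perm (Fin 6)) (t : Quad) : Prop where
  u : Rep t.u (φ _root_.u)
  v : Rep t.v (φ _root_.v)
  x : Rep t.x (φ _root_.x)
  z : Rep t.z (φ _root_.z)

theorem Realizes.w {φ : G →* Perm (Fin 6)} {t : Quad} (h : Realizes φ t) :
    Rep t.w (φ _root_.w) := by
  rw [(rels_G.map φ).w_eq]
  exact ((h.u.inv.mul h.v.inv).mul h.z).mul h.x

theorem Realizes.y {φ : G →* Perm (Fin 6)} {t : Quad} (h : Realizes φ t) :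
    Rep t.y (φ _root_.y) := by
  rw [(rels_G.map φ).y_eq]
  exact ((h.x.mul h.v).mul h.z.inv).mul h.u.inv

/-- Seven elements of `G` whose numbers of fixed points separate the transitive representations of
degree six. -/
def word : List G :=
  [_root_.u * _root_.u, _root_.u * _root_.v * _root_.v * _root_.w,
    _root_.u * _root_.y * _root_.x * _root_.v, _root_.w * _root_.z * _root_.z,
    _root_.v * _root_.v * _root_.y * _root_.w, _root_.v, _root_.x]

theorem Realizes.key {φ : G →* Perm (Fin 6)} {t : Quad} (h : Realizes φ t) :
    t.key = word.foldl (fun n g => 7 * n + (φ g).support.card) 0 := by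
  simp only [Quad.key, word, List.foldl_cons, List.foldl_nil, map_mul]
  rw [moved_eq (h.u.mul h.u), moved_eq (((h.u.mul h.v).mul h.v).mul h.w),
    moved_eq (((h.u.mul h.y).mul h.x).mul h.v), moved_eq ((h.w.mul h.z).mul h.z),
    moved_eq (((h.v.mul h.v).mul h.y).mul h.w), moved_eq h.v, moved_eq h.x]

theorem eq_one_of_beqc {c : Code} {π : Perm (Fin 6)} (hc : Rep c π)
    (h : beqc c onec = true) : π = 1 :=
  hc.ext rep_onec fun i => by rw [eq_of_beqc h]

theorem exists_realizes {t : Quad} (h : t.valid = true) : ∃ φ, Realizes φ t := by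
  simp only [Quad.valid, Quad.relc, Bool.and_eq_true] at h
  obtain ⟨⟨⟨⟨hu, hv⟩, hx⟩, hz⟩, ⟨⟨⟨⟨h1, h2⟩, h3⟩, h4⟩, h5⟩, h6⟩ := h
  obtain ⟨U, hu⟩ := exists_rep hu
  obtain ⟨V, hv⟩ := exists_rep hv
  obtain ⟨X, hx⟩ := exists_rep hx
  obtain ⟨Z, hz⟩ := exists_rep hz
  have hw : Rep t.w _ := ((hu.inv.mul hv.inv).mul hz).mul hx
  have hy : Rep t.y _ := ((hx.mul hv).mul hz.inv).mul hu.inv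
  obtain ⟨φ, eu, ev, -, ex, -, ez⟩ := exists_hom (u := U) (v := V) (x := X) (z := Z)
    ⟨eq_one_of_beqc ((((hu.mul hx).mul hy.inv).mul hv.inv).mul hw) h1,
      eq_one_of_beqc ((((hu.mul hy).mul hz.inv).mul hw.inv).mul hx) h2,
      eq_one_of_beqc ((((hu.mul hz).mul hv.inv).mul hx.inv).mul hy) h3,
      eq_one_of_beqc ((((hu.mul hv).mul hw.inv).mul hy.inv).mul hz) h4,
      eq_one_of_beqc ((((hu.mul hw).mul hx.inv).mul hz.inv).mul hv) h5,
      eq_one_of_beqc ((((hv.mul hx).mul hz).mul hw).mul hy) h6⟩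
  exact ⟨φ, eu ▸ hu, ev ▸ hv, ex ▸ hx, ez ▸ hz⟩

/-- A set invariant under the generators is invariant under all of `G`. -/
theorem invt_iff {t : Quad} {S : ℕ} {φ : G →* Perm (Fin 6)} (h : Realizes φ t) :
    t.invt S = true ↔ ∀ (g : G) (i : Fin 6), S.testBit (φ g i : Fin 6) = S.testBit i := by
  constructor
  · intro hS
    simp only [Quad.invt, List.all_eq_true, List.mem_range, List.mem_cons, List.not_mem_nil,
      or_false, forall_eq_or_imp, forall_eq, beq_iff_eq] at hS
    let K : Subgroup G :=
      { carrier := {g | ∀ i : Fin 6, S.testBit (φ g i : Fin 6) = S.testBit i}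
        one_mem' := fun i => by rw [map_one]; rfl
        mul_mem' := fun {a b} ha hb i => by rw [map_mul, Perm.mul_apply, ha, hb]
        inv_mem' := fun {a} ha i => by
          rw [← ha, ← Perm.mul_apply, ← map_mul, mul_inv_cancel, map_one]; rfl }
    exact mem_of_gens K (fun i => by rw [← h.u]; exact (hS i i.isLt).1)
      (fun i => by rw [← h.v]; exact (hS i i.isLt).2.1)
      (fun i => by rw [← h.x]; exact (hS i i.isLt).2.2.1)
      (fun i => by rw [← h.z]; exact (hS i i.isLt).2.2.2)
  · intro hS
    simp only [Quad.invt, List.all_eq_true, List.mem_range, List.mem_cons, List.not_mem_nil,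
      or_false, forall_eq_or_imp, forall_eq, beq_iff_eq]
    intro i hi
    lift i to Fin 6 using hi
    rw [h.u, h.v, h.x, h.z]
    exact ⟨hS _ i, hS _ i, hS _ i, hS _ i⟩

/-- Every set of points is given by a number below `64`. -/
theorem exists_mask : ∀ p : Fin 6 → Bool, ∃ S : Fin 64, ∀ i : Fin 6, S.val.testBit i = p i := by
  decide +kernel

theorem mask_full : ∀ S : Fin 64, (∀ i : Fin 6, S.val.testBit i = true) → S.val.beq 63 = true := by
  decide +kernel

theorem trans_iff {t : Quad} {φ : G →* Perm (Fin 6)} (h : Realizes φ t) :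
    t.trans = true ↔ IsTrans φ := by
  rw [Quad.trans, List.all_eq_true]
  constructor
  · intro ht i
    classical
    obtain ⟨S, hS⟩ := exists_mask fun i => decide (∃ g, φ g 0 = i)
    have h0 : S.val.testBit 0 = true :=
      (hS 0).trans (decide_eq_true ⟨1, by rw [map_one]; rfl⟩)
    have hi : t.invt S.val = true := (invt_iff h).2 fun g i => by
      rw [hS, hS, decide_eq_decide]
      constructor
      · rintro ⟨k, hk⟩
        exact ⟨g⁻¹ * k, by
          rw [map_mul, Perm.mul_apply, map_inv, Perm.inv_eq_iff_eq, hk]⟩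
      · rintro ⟨k, hk⟩
        exact ⟨g * k, by rw [map_mul, Perm.mul_apply, hk]⟩
    have := ht S.val (List.mem_range.2 S.isLt)
    simp only [h0, hi, Bool.not_true, Bool.false_or, Bool.or_false, Nat.beq_eq] at this
    have hb := hS i
    rw [this] at hb
    refine of_decide_eq_true (hb.symm.trans ?_)
    fin_cases i <;> rfl
  · intro ht S hS
    have hS' := mask_full ⟨S, List.mem_range.1 hS⟩
    cases h0 : S.testBit 0 with
    | false => simp
    | true =>
      cases hi : t.invt S with
      | false => simp
      | true =>
        rw [hS' fun i => ?_]
        · simp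
        · obtain ⟨g, rfl⟩ := ht i
          exact ((invt_iff h).1 hi g 0).trans h0

/-- The representation `g ↦ σ⁻¹ * φ g * σ`. -/
def conjHom (σ : Perm (Fin 6)) (φ : G →* Perm (Fin 6)) : G →* Perm (Fin 6) where
  toFun g := σ⁻¹ * φ g * σ
  map_one' := by simp
  map_mul' a b := by simp [mul_assoc]

theorem conjHom_apply (σ : Perm (Fin 6)) (φ : G →* Perm (Fin 6)) (g : G) :
    conjHom σ φ g = σ⁻¹ * φ g * σ := rfl

theorem Rep.of_commute {s c : Code} {σ π : Perm (Fin 6)} (hs : Rep s σ) (hc : Rep c π)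
    (h : beqc (mulc s c) (mulc c s) = true) : Rep c (σ⁻¹ * π * σ) := by
  have e : σ * π = π * σ := (hs.mul hc).ext (hc.mul hs) fun i => by rw [eq_of_beqc h]
  rwa [mul_assoc, ← e, inv_mul_cancel_left]

theorem Rep.of_conjc {s c : Code} {σ π : Perm (Fin 6)} (hs : Rep s σ) (hc : isPerm c = true)
    (h : Rep (conjc s c) π) : Rep c (σ⁻¹ * π * σ) := by
  obtain ⟨ρ, hρ⟩ := exists_rep hc
  have e : π = σ * ρ * σ⁻¹ := h.ext ((hs.mul hρ).mul hs.inv) fun _ => rfl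
  rw [e]
  simpa [mul_assoc] using hρ

/-- Every permutation representation of degree six is equivalent to a listed one. -/
theorem exists_rep_realizes (φ : G →* Perm (Fin 6)) :
    ∃ t ∈ reps, ∃ σ, Realizes (conjHom σ φ) t := by
  have hsig : ∀ ψ : G →* Perm (Fin 6), _ := fun ψ => (rels_G.map ψ).sign
  obtain ⟨-, -, σ, -, r, hr, hu⟩ := cover_sound cover_table (hsig φ).1
  obtain ⟨e, he, rfl⟩ := List.mem_map.1 hr
  have hchk := List.all_eq_true.1 check_table e he
  rw [checkU, Bool.and_eq_true, List.all_eq_true] at hchk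
  obtain ⟨hcov, hchk⟩ := hchk
  obtain ⟨c, hc, τ, hτ, r, hr', hv⟩ := cover_sound hcov (hsig (conjHom σ φ)).2.1
  obtain ⟨f, hf, rfl⟩ := List.mem_map.1 hr'
  have hcf := hchk f hf
  rw [Bool.and_eq_true, List.all_eq_true] at hcf
  obtain ⟨hq, hsift⟩ := hcf
  have hu2 : Rep (P e.1) (conjHom τ (conjHom σ φ) _root_.u) :=
    hτ.of_commute hu (List.mem_filter.1 hc).2
  obtain ⟨p, hp, hx, hz⟩ := siftPair_sound hsift hu2 hv (hsig _).2.2.1 (hsig _).2.2.2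
    (rels_G.map _)
  obtain ⟨q, hqm, hp⟩ := List.mem_flatMap.1 hp
  obtain ⟨s, hs, rfl⟩ := List.mem_map.1 hp
  obtain ⟨hs, hsv⟩ := List.mem_filter.1 hs
  obtain ⟨hs, hsu⟩ := List.mem_filter.1 hs
  obtain ⟨ρ, hρ⟩ := exists_rep (List.all_eq_true.1 s6_isPerm s hs)
  have hqp := hq q hqm
  rw [Bool.and_eq_true] at hqp
  refine ⟨⟨P e.1, P f.1, P q.1, P q.2⟩, List.mem_flatMap.2 ⟨e, he, List.mem_flatMap.2
    ⟨f, hf, List.mem_map.2 ⟨q, hqm, rfl⟩⟩⟩, σ * τ * ρ, ?_⟩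
  have h3 : ∀ g, conjHom (σ * τ * ρ) φ g = ρ⁻¹ * conjHom τ (conjHom σ φ) g * ρ := fun g => by
    simp [conjHom_apply, mul_assoc]
  constructor
  · rw [h3]; exact hρ.of_commute hu2 hsu
  · rw [h3]; exact hρ.of_commute hv hsv
  · rw [h3]; exact hρ.of_conjc hqp.1 hx
  · rw [h3]; exact hρ.of_conjc hqp.2 hz

theorem IsTrans.conjHom {φ : G →* Perm (Fin 6)} (h : IsTrans φ) (σ : Perm (Fin 6)) :
    IsTrans (conjHom σ φ) := by
  intro i
  obtain ⟨a, ha⟩ := h (σ 0)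
  obtain ⟨b, hb⟩ := h (σ i)
  refine ⟨b * a⁻¹, ?_⟩
  rw [conjHom_apply, Perm.mul_apply, Perm.mul_apply, ← ha, map_mul, map_inv, Perm.mul_apply,
    ← Perm.mul_apply (φ a)⁻¹, inv_mul_cancel, Perm.one_apply, hb, Perm.inv_eq_iff_eq]

/-- Each listed quadruple comes from a transitive representation. -/
theorem exists_model (i : Fin 61) : ∃ φ : G →* Perm (Fin 6), IsTrans φ ∧
    Realizes φ (transReps.get (i.cast transReps_length.symm)) := by
  obtain ⟨hm, ht⟩ := List.mem_filter.1 (transReps.get_mem (i.cast transReps_length.symm))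
  obtain ⟨φ, hφ⟩ := exists_realizes (List.all_eq_true.1 reps_valid _ hm)
  exact ⟨φ, (trans_iff hφ).1 ht, hφ⟩

/-- The point stabilizers of the 61 listed representations represent the conjugacy classes: distinct
ones have distinct keys, and every subgroup of index six is a point stabilizer of a representation
equivalent to a listed one. -/
theorem card_classes : Nat.card (Quot Cj) = 61 := by
  choose φ hφ hr using exists_model
  let f : Fin 61 → Quot Cj := fun i => Quot.mk _ ⟨stab (φ i), (hφ i).index⟩
  have hf : Function.Bijective f := by
    constructor
    · intro i j hij
      obtain ⟨g, hg⟩ := (cj_equivalence.quot_mk_eq_iff _ _).1 hij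
      obtain ⟨σ, hσ⟩ := equiv_of_conj_stab (hφ i) hg
      have hk : (transReps.get (i.cast transReps_length.symm)).key =
          (transReps.get (j.cast transReps_length.symm)).key := by
        rw [(hr i).key, (hr j).key]
        simp only [hσ, Perm.card_support_conj]
      have := List.inj_on_of_nodup_map transReps_nodup (List.get_mem _ _) (List.get_mem _ _) hk
      exact Fin.cast_injective _
        (List.nodup_iff_injective_get.1 (transReps_nodup.of_map _) this)
    · rintro ⟨K, hK⟩
      obtain ⟨ψ, hψ, rfl⟩ := exists_stab_eq hK
      obtain ⟨t, ht, σ, ht'⟩ := exists_rep_realizes ψ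
      have htm : t ∈ transReps := List.mem_filter.2 ⟨ht, (trans_iff ht').2 (hψ.conjHom σ)⟩
      obtain ⟨n, hn⟩ := List.get_of_mem htm
      refine ⟨n.cast transReps_length, Quot.sound ?_⟩
      have hn' := hr (n.cast transReps_length)
      change Realizes _ (transReps.get n) at hn'
      rw [hn] at hn'
      refine conj_stab_of_equiv (hφ _) (σ := σ) fun g => ?_
      rw [hom_ext (hn'.u.ext ht'.u fun _ => rfl) (hn'.v.ext ht'.v fun _ => rfl)
        (hn'.x.ext ht'.x fun _ => rfl) (hn'.z.ext ht'.z fun _ => rfl) g, conjHom_apply]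
      simp [mul_assoc]
  rw [← Nat.card_eq_of_bijective f hf, Nat.card_fin]

end WS

/-- `G` has exactly 61 conjugacy classes of subgroups of index 6. -/
theorem ws_index_six_subgroups :
    Nat.card (Quot (fun K₁ K₂ : {K : Subgroup G // K.index = 6} =>
      ∃ g : G, Subgroup.map (MulAut.conj g).toMonoidHom K₁.1 = K₂.1)) = 61 :=
  WS.card_classes
end
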